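/- Suppose g(r) = o(e^{-c r}) as r → ∞ for some c > 0, and fix γ > 1. Let δ_n denote the minimum vertex degree of G_n(r̂_n(γ)). Then almost surely, lim_{n→∞} δ_n/(log n) = γ·H₋⁻¹(1/γ). -/

import Mathlib

open MeasureTheory ProbabilityTheory Filter Set

noncomputable section

namespace RCM

/-- The toroidal metric on the unit cube. -/
def torusDist {d : ℕ} (x y : EuclideanSpace ℝ (Fin d)) : ℝ :=
  ⨅ z : Fin d → ℤ, ‖x - y - (WithLp.equiv 2 (Fin d → ℝ)).symm (fun i => (z i : ℝ))‖

/-- The half-open unit cube `S = (-1/2, 1/2]^d`. -/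
def cube (d : ℕ) : Set (EuclideanSpace ℝ (Fin d)) :=
  {x | ∀ i, x i ∈ Set.Ioc (-(1/2) : ℝ) (1/2)}

/-- The random connection model: i.i.d. uniform points `X`, coupled Poisson counts `N`,
i.i.d. uniform edge variables `U`, with the three families mutually independent, and a
non-increasing connection function `g : [0,∞) → [0,1]` with finite positive integral `α`. -/
structure Model (d : ℕ) {Ω : Type*} [MeasurableSpace Ω] (P : Measure Ω) where
  g : ℝ → ℝ
  α : ℝ
  X : ℕ → Ω → EuclideanSpace ℝ (Fin d)
  N : ℕ → Ω → ℕ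
  U : ℕ → ℕ → Ω → ℝ
  g_antitone : AntitoneOn g (Set.Ici 0)
  g_mem : ∀ r : ℝ, 0 ≤ r → g r ∈ Set.Icc (0 : ℝ) 1
  g_integrable : MeasureTheory.Integrable (fun x : EuclideanSpace ℝ (Fin d) => g ‖x‖)
  α_def : α = ∫ x : EuclideanSpace ℝ (Fin d), g ‖x‖
  α_pos : 0 < α
  X_meas : ∀ i, Measurable (X i)
  X_unif : ∀ i : ℕ, 1 ≤ i → Measure.map (X i) P = volume.restrict (cube d)
  X_indep : iIndepFun
    (fun i : {i : ℕ // 1 ≤ i} => X i) P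
  N_meas : ∀ n, Measurable (N n)
  N_mono : ∀ ω, Monotone fun n => N n ω
  N_poisson : ∀ n k : ℕ,
    P {ω | N n ω = k} = ENNReal.ofReal (Real.exp (-(n : ℝ)) * (n : ℝ) ^ k / k.factorial)
  U_meas : ∀ i j, Measurable (U i j)
  U_unif : ∀ i j : ℕ, 1 ≤ i → i < j →
    Measure.map (U i j) P = volume.restrict (Set.Icc (0 : ℝ) 1)
  U_indep : iIndepFun
    (fun p : {p : ℕ × ℕ // 1 ≤ p.1 ∧ p.1 < p.2} => U p.1.1 p.1.2) P
  families_indep : iIndep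
    (![MeasurableSpace.comap (fun ω => fun i : ℕ => X i ω) inferInstance,
       MeasurableSpace.comap (fun ω => fun n : ℕ => N n ω) inferInstance,
       MeasurableSpace.comap (fun ω => fun p : ℕ × ℕ => U p.1 p.2 ω) inferInstance]) P

variable {d : ℕ} {Ω : Type*} [MeasurableSpace Ω] {P : Measure Ω}

/-- Adjacency in the graph `G_n(r)`: vertices `1 ≤ i,j ≤ N_n` are joined iff
`U_{ij} ≤ g(dist(X_i,X_j)/r)`. -/
def adj (M : Model d P) (n : ℕ) (r : ℝ) (ω : Ω) (i j : ℕ) : Prop :=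
  i ≠ j ∧ 1 ≤ i ∧ 1 ≤ j ∧ i ≤ M.N n ω ∧ j ≤ M.N n ω ∧
    M.U (min i j) (max i j) ω ≤ M.g (torusDist (M.X i ω) (M.X j ω) / r)

/-- The degree of vertex `i` in `G_n(r)`. -/
def deg (M : Model d P) (n : ℕ) (r : ℝ) (ω : Ω) (i : ℕ) : ℕ :=
  {j : ℕ | adj M n r ω i j}.ncard

/-- `W_n(r)`, the number of isolated vertices of `G_n(r)`. -/
def isolatedCount (M : Model d P) (n : ℕ) (r : ℝ) (ω : Ω) : ℕ :=
  {i : ℕ | 1 ≤ i ∧ i ≤ M.N n ω ∧ deg M n r ω i = 0}.ncard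


/-- `r̂_n(γ)` defined by `r̂_n(γ)^d = γ log n / (α n)`. -/
def rhat (M : Model d P) (γ : ℝ) (n : ℕ) : ℝ :=
  (γ * Real.log n / (M.α * n)) ^ ((1 : ℝ) / d)

/-- `d_n`, the critical parameter for absence of isolated nodes. -/
def critRadius (M : Model d P) (n : ℕ) (ω : Ω) : ℝ :=
  sInf {r : ℝ | 0 < r ∧ isolatedCount M n r ω = 0}

/-- The maximum vertex degree `Δ_n` of `G_n(r)`. -/
def maxDeg (M : Model d P) (n : ℕ) (r : ℝ) (ω : Ω) : ℕ :=
  (Finset.Icc 1 (M.N n ω)).sup (deg M n r ω)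

/-- The minimum vertex degree `δ_n` of `G_n(r)`. -/
def minDeg (M : Model d P) (n : ℕ) (r : ℝ) (ω : Ω) : ℕ :=
  sInf {k : ℕ | ∃ i, 1 ≤ i ∧ i ≤ M.N n ω ∧ deg M n r ω i = k}

/-- The length (toroidal metric) of the longest edge of `G_n(r)` (`0` if there are no edges). -/
def longestEdge (M : Model d P) (n : ℕ) (r : ℝ) (ω : Ω) : ℝ :=
  sSup ({0} ∪ {t : ℝ | ∃ i j, adj M n r ω i j ∧ t = torusDist (M.X i ω) (M.X j ω)})

/-- Connectivity of `G_n(r)`: any two vertices are joined by a path. -/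
def connectedGraph (M : Model d P) (n : ℕ) (r : ℝ) (ω : Ω) : Prop :=
  ∀ i j : ℕ, 1 ≤ i → i ≤ M.N n ω → 1 ≤ j → j ≤ M.N n ω →
    Relation.ReflTransGen (adj M n r ω) i j

/-- `H(x) = 1 - x + x log x` (with `H(0) = 1`, since `log 0 = 0` in Lean). -/
def H (x : ℝ) : ℝ := 1 - x + x * Real.log x

/-- The inverse of the restriction of `H` to `[1, ∞)`. -/
def Hplusinv (y : ℝ) : ℝ := sInf {x : ℝ | 1 ≤ x ∧ y ≤ H x}

/-- The inverse of the restriction of `H` to `[0, 1]`. -/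
def Hminusinv (y : ℝ) : ℝ := sInf {x : ℝ | 0 ≤ x ∧ H x ≤ y}

/-- The standard normal distribution function. -/
def stdNormalCDF (x : ℝ) : ℝ :=
  ∫ t in Set.Iic x, Real.exp (-t ^ 2 / 2) / Real.sqrt (2 * Real.pi)

/-! ### Geometry of the torus -/

/-- The integer lattice as a homomorphism into Euclidean space. -/
def latticeHom (d : ℕ) : (Fin d → ℤ) →+ EuclideanSpace ℝ (Fin d) where
  toFun z := (WithLp.equiv 2 (Fin d → ℝ)).symm (fun i => (z i : ℝ))
  map_zero' := by ext i; simp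
  map_add' a b := by ext i; simp

@[simp] lemma latticeHom_apply (z : Fin d → ℤ) (i : Fin d) : latticeHom d z i = z i := rfl

lemma torusDist_eq (x y : EuclideanSpace ℝ (Fin d)) :
    torusDist x y = ⨅ z : Fin d → ℤ, ‖x - y - latticeHom d z‖ := rfl

lemma torusDist_bddBelow (x y : EuclideanSpace ℝ (Fin d)) :
    BddBelow (Set.range fun z : Fin d → ℤ => ‖x - y - latticeHom d z‖) :=
  ⟨0, by rintro _ ⟨z, rfl⟩; exact norm_nonneg _⟩

lemma torusDist_nonneg (x y : EuclideanSpace ℝ (Fin d)) : 0 ≤ torusDist x y :=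
  Real.iInf_nonneg fun _ => norm_nonneg _

lemma torusDist_triangle (x x' y : EuclideanSpace ℝ (Fin d)) :
    torusDist x x' ≤ torusDist x y + torusDist x' y := by
  rw [torusDist_eq x y, torusDist_eq x' y]
  refine le_ciInf_add_ciInf fun z w => ?_
  refine (ciInf_le (torusDist_bddBelow x x') (z - w)).trans ?_
  refine le_trans (le_of_eq ?_) (norm_sub_le _ _)
  rw [map_sub]
  congr 1
  abel

lemma torusDist_add_lattice (x y : EuclideanSpace ℝ (Fin d)) (w : Fin d → ℤ) :
    torusDist x (latticeHom d w + y) = torusDist x y := by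
  rw [torusDist_eq, torusDist_eq]
  refine Equiv.iInf_congr (Equiv.addRight w) fun z => ?_
  simp only [Equiv.coe_addRight, map_add]
  congr 1
  abel

lemma torusDist_add_right (x y : EuclideanSpace ℝ (Fin d)) :
    torusDist x (x + y) = torusDist 0 y := by
  simp [torusDist_eq]

lemma torusDist_zero_of_mem_cube {y : EuclideanSpace ℝ (Fin d)} (hy : y ∈ cube d) :
    torusDist 0 y = ‖y‖ := by
  rw [torusDist_eq]
  apply le_antisymm
  · simpa using ciInf_le (torusDist_bddBelow 0 y) 0
  · refine le_ciInf fun z => ?_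
    rw [EuclideanSpace.norm_eq, EuclideanSpace.norm_eq]
    refine Real.sqrt_le_sqrt (Finset.sum_le_sum fun i _ => ?_)
    rw [Real.norm_eq_abs, Real.norm_eq_abs, sq_abs, sq_abs]
    simp only [PiLp.sub_apply, PiLp.neg_apply, latticeHom_apply, zero_sub]
    have h := hy i
    simp only [Set.mem_Ioc] at h
    rcases lt_trichotomy (z i) 0 with hz | hz | hz
    · have : (z i : ℝ) ≤ -1 := by exact_mod_cast Int.le_sub_one_of_lt hz
      nlinarith [mul_nonneg_of_nonpos_of_nonpos (show (z i : ℝ) ≤ 0 by linarith)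
        (show (z i : ℝ) + 2 * y i ≤ 0 by linarith)]
    · simp [hz]
    · have : (1 : ℝ) ≤ z i := by exact_mod_cast hz
      nlinarith [mul_nonneg (show (0 : ℝ) ≤ z i by linarith)
        (show (0 : ℝ) ≤ z i + 2 * y i by linarith)]

lemma measurableSet_cube : MeasurableSet (cube d) := by
  have : cube d = ⋂ i, (fun x : EuclideanSpace ℝ (Fin d) => x i) ⁻¹'
      Set.Ioc (-(1/2) : ℝ) (1/2) := by
    ext x; simp [cube]
  rw [this]
  exact MeasurableSet.iInter fun i => measurableSet_Ioc.preimage (by fun_prop)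

lemma isAddFundamentalDomain_translate (x : EuclideanSpace ℝ (Fin d)) :
    IsAddFundamentalDomain (latticeHom d).range {y | y - x ∈ cube d} volume := by
  refine IsAddFundamentalDomain.mk'
    (measurableSet_cube.preimage (measurable_id.sub_const x)).nullMeasurableSet fun v => ?_
  have key : ∀ i, ∃! k : ℤ, v i - x i + k • (1 : ℝ) ∈ Set.Ioc (-(1/2) : ℝ) (-(1/2) + 1) :=
    fun i => existsUnique_add_zsmul_mem_Ioc one_pos _ _
  choose z hz hzu using key
  have e1 : (-(1/2) + 1 : ℝ) = 1/2 := by norm_num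
  rw [e1] at hz hzu
  refine ⟨⟨latticeHom d z, z, rfl⟩, ?_, ?_⟩
  · intro i
    have := hz i
    simp only [AddSubgroup.vadd_def, vadd_eq_add, PiLp.sub_apply, PiLp.add_apply,
      latticeHom_apply]
    simp only [zsmul_eq_mul, mul_one] at this
    convert this using 1
    ring
  · rintro ⟨_, w, rfl⟩ hw
    have : w = z := by
      funext i
      apply hzu i
      have := hw i
      simp only [AddSubgroup.vadd_def, vadd_eq_add, PiLp.sub_apply, PiLp.add_apply,
        latticeHom_apply] at this
      simp only [zsmul_eq_mul, mul_one]
      convert this using 1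
      ring
    subst this
    rfl

/-- Integrals over the cube of functions of the toroidal distance do not depend on the base
point. -/
lemma lintegral_cube_torusDist (f : ℝ → ENNReal) (x : EuclideanSpace ℝ (Fin d)) :
    ∫⁻ y in cube d, f (torusDist x y) = ∫⁻ y in cube d, f ‖y‖ := by
  have : Countable (latticeHom d).range :=
    (Set.countable_range (latticeHom d)).to_subtype
  have h0 := isAddFundamentalDomain_translate (0 : EuclideanSpace ℝ (Fin d))
  simp only [sub_zero, Set.ofPred_mem_eq] at h0
  rw [h0.setLIntegral_eq (isAddFundamentalDomain_translate x)]
  · have hp : MeasurePreserving (fun y : EuclideanSpace ℝ (Fin d) => x + y) volume volume :=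
      measurePreserving_add_left _ x
    have he : MeasurableEmbedding (fun y : EuclideanSpace ℝ (Fin d) => x + y) :=
      measurableEmbedding_addLeft x
    rw [← hp.setLIntegral_comp_preimage_emb he]
    have hs : (fun y => x + y) ⁻¹' {y | y - x ∈ cube d} = cube d := by
      ext y; simp
    rw [hs]
    refine setLIntegral_congr_fun measurableSet_cube fun y hy => ?_
    simp only [torusDist_add_right, torusDist_zero_of_mem_cube hy]
  · rintro ⟨_, w, rfl⟩ y
    simp only [AddSubgroup.vadd_def, vadd_eq_add, torusDist_add_lattice]

/-! ### Lower tails of the binomial distribution -/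

/-- The probability that a binomial variable with parameters `m` and `p` is less than `s`. -/
def binLt (p : ℝ) : ℕ → ℕ → ℝ
  | _, 0 => 0
  | 0, _ + 1 => 1
  | m + 1, s + 1 => (1 - p) * binLt p m (s + 1) + p * binLt p m s

@[simp] lemma binLt_zero_right (p : ℝ) (m : ℕ) : binLt p m 0 = 0 := by
  cases m <;> rfl

@[simp] lemma binLt_zero_succ (p : ℝ) (s : ℕ) : binLt p 0 (s + 1) = 1 := rfl

lemma binLt_succ_succ (p : ℝ) (m s : ℕ) :
    binLt p (m + 1) (s + 1) = (1 - p) * binLt p m (s + 1) + p * binLt p m s := rfl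

section

variable {p : ℝ}

lemma binLt_nonneg (h0 : 0 ≤ p) (h1 : p ≤ 1) (m s : ℕ) : 0 ≤ binLt p m s := by
  induction m generalizing s with
  | zero => cases s <;> simp
  | succ m ih =>
    cases s with
    | zero => simp
    | succ s =>
      rw [binLt_succ_succ]
      exact add_nonneg (mul_nonneg (by linarith) (ih _)) (mul_nonneg h0 (ih _))

lemma binLt_le_succ (h0 : 0 ≤ p) (h1 : p ≤ 1) (m s : ℕ) :
    binLt p m s ≤ binLt p m (s + 1) := by
  induction m generalizing s with
  | zero => cases s <;> simp
  | succ m ih =>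
    cases s with
    | zero => simpa using binLt_nonneg h0 h1 _ _
    | succ s =>
      rw [binLt_succ_succ, binLt_succ_succ]
      exact add_le_add (mul_le_mul_of_nonneg_left (ih _) (by linarith))
        (mul_le_mul_of_nonneg_left (ih _) h0)

lemma mul_binLt_le_succ (h0 : 0 ≤ p) (h1 : p ≤ 1) (m s : ℕ) :
    (1 - p) * binLt p m s ≤ binLt p (m + 1) s := by
  cases s with
  | zero => simp
  | succ s =>
    rw [binLt_succ_succ]
    linarith [mul_nonneg h0 (binLt_nonneg h0 h1 m s)]

/-- The Chernoff bound for the lower tail of a binomial variable. -/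
lemma binLt_le_exp (h0 : 0 ≤ p) (h1 : p ≤ 1) (θ : ℝ) (m s : ℕ) (hθ : 0 ≤ θ) :
    binLt p m s ≤ Real.exp (θ * (s - 1) - m * p * (1 - Real.exp (-θ))) := by
  have hq : 1 - p * (1 - Real.exp (-θ)) ≤ Real.exp (-(p * (1 - Real.exp (-θ)))) := by
    linarith [Real.add_one_le_exp (-(p * (1 - Real.exp (-θ))))]
  have key : ∀ m s : ℕ,
      binLt p m s ≤ Real.exp (θ * (s - 1)) * (1 - p * (1 - Real.exp (-θ))) ^ m := by
    intro m
    have hq0 : 0 ≤ 1 - p * (1 - Real.exp (-θ)) := by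
      nlinarith [mul_nonneg h0 (Real.exp_pos (-θ)).le]
    induction m with
    | zero =>
      intro s
      cases s with
      | zero => simpa using (Real.exp_pos _).le
      | succ s => simpa using mul_nonneg hθ s.cast_nonneg
    | succ m ih =>
      intro s
      cases s with
      | zero => simpa using mul_nonneg (Real.exp_pos _).le (pow_nonneg hq0 _)
      | succ s =>
        rw [binLt_succ_succ]
        refine (add_le_add (mul_le_mul_of_nonneg_left (ih _) (by linarith))
          (mul_le_mul_of_nonneg_left (ih _) h0)).trans (le_of_eq ?_)
        have : Real.exp (θ * ((s : ℝ) - 1)) =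
            Real.exp (θ * (((s + 1 : ℕ) : ℝ) - 1)) * Real.exp (-θ) := by
          rw [← Real.exp_add]; congr 1; push_cast; ring
        rw [this]
        ring
  refine (key m s).trans ?_
  rw [sub_eq_add_neg (θ * _), Real.exp_add]
  refine mul_le_mul_of_nonneg_left ?_ (Real.exp_pos _).le
  calc (1 - p * (1 - Real.exp (-θ))) ^ m ≤ Real.exp (-(p * (1 - Real.exp (-θ)))) ^ m := by
        refine pow_le_pow_left₀ ?_ hq m
        nlinarith [mul_nonneg h0 (Real.exp_pos (-θ)).le]
    _ = Real.exp (-(m * p * (1 - Real.exp (-θ)))) := by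
        rw [← Real.exp_nat_mul]; congr 1; ring

lemma choose_mul_le_binLt (h0 : 0 ≤ p) (h1 : p ≤ 1) (m k : ℕ) :
    m.choose k * p ^ k * (1 - p) ^ (m - k) ≤ binLt p m (k + 1) - binLt p m k := by
  induction m generalizing k with
  | zero => cases k <;> simp
  | succ m ih =>
    cases k with
    | zero =>
      have := mul_le_mul_of_nonneg_left (ih 0) (show 0 ≤ 1 - p by linarith)
      simp only [Nat.choose_zero_right, Nat.cast_one, pow_zero, mul_one, Nat.sub_zero, one_mul,
        zero_add, binLt_zero_right, sub_zero] at this ⊢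
      rw [show (1 : ℕ) = 0 + 1 from rfl, binLt_succ_succ, pow_succ]
      simp only [zero_add, binLt_zero_right, mul_zero, add_zero]
      linarith
    | succ k =>
      have a1 := mul_le_mul_of_nonneg_left (ih (k + 1)) (show 0 ≤ 1 - p by linarith)
      have a2 := mul_le_mul_of_nonneg_left (ih k) h0
      rw [binLt_succ_succ, binLt_succ_succ, Nat.choose_succ_succ, Nat.add_sub_add_right]
      rcases Nat.lt_or_ge k m with hk | hk
      · have e : m - k = (m - (k + 1)) + 1 := by omega
        have e2 : (1 - p) ^ (m - k) = (1 - p) ^ (m - (k + 1)) * (1 - p) := by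
          rw [← pow_succ, ← e]
        push_cast
        rw [e2] at a2 ⊢
        have : ((m.choose k : ℝ) + m.choose (k + 1)) * p ^ (k + 1) *
            ((1 - p) ^ (m - (k + 1)) * (1 - p)) =
            (1 - p) * (m.choose (k + 1) * p ^ (k + 1) * (1 - p) ^ (m - (k + 1))) +
            p * (m.choose k * p ^ k * ((1 - p) ^ (m - (k + 1)) * (1 - p))) := by ring
        rw [this]
        linarith
      · have e : m.choose (k + 1) = 0 := Nat.choose_eq_zero_of_lt (by omega)
        rw [e] at a1 ⊢
        push_cast at a1 ⊢
        have : ((m.choose k : ℝ) + 0) * p ^ (k + 1) * (1 - p) ^ (m - k) =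
            p * (m.choose k * p ^ k * (1 - p) ^ (m - k)) := by ring
        rw [this]
        linarith

lemma factorial_le_exp (k : ℕ) (hk : 1 ≤ k) :
    (k.factorial : ℝ) ≤ Real.exp (k * Real.log k - k + 1 + Real.log k) := by
  induction k, hk using Nat.le_induction with
  | base => simp
  | succ k hk ih =>
    have hk0 : (0 : ℝ) < k := by exact_mod_cast hk
    rw [Nat.factorial_succ]
    push_cast
    have h2 : Real.exp (Real.log (k + 1)) = k + 1 := Real.exp_log (by positivity)
    nth_rewrite 1 [← h2]
    refine (mul_le_mul_of_nonneg_left ih (Real.exp_pos _).le).trans ?_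
    rw [← Real.exp_add]
    refine Real.exp_le_exp.2 ?_
    have h3 : 1 / ((k : ℝ) + 1) ≤ Real.log (k + 1) - Real.log k := by
      rw [← Real.log_div (by positivity) hk0.ne']
      have := Real.one_sub_inv_le_log_of_pos (show 0 < ((k : ℝ) + 1) / k by positivity)
      refine le_trans (le_of_eq ?_) this
      field_simp
      ring
    rw [div_le_iff₀ (by positivity)] at h3
    nlinarith

/-- A lower bound for the lower tail of a binomial variable. -/
lemma exp_le_binLt (h0 : 0 < p) (h1 : p < 1) {m k : ℕ} (hk : 1 ≤ k) (hkm : k < m) :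
    Real.exp (k * (1 + Real.log ((m - k) * p / k)) - 1 - Real.log k - m * p / (1 - p)) ≤
      binLt p m (k + 1) := by
  have hk0 : (0 : ℝ) < k := by exact_mod_cast hk
  have hmk : (0 : ℝ) < m - k := by
    have : (k : ℝ) < m := by exact_mod_cast hkm
    linarith
  have hb := choose_mul_le_binLt h0.le h1.le m k
  have hb' : m.choose k * p ^ k * (1 - p) ^ (m - k) ≤ binLt p m (k + 1) := by
    linarith [binLt_nonneg h0.le h1.le m k]
  refine le_trans ?_ hb'
  have hlog : -(p / (1 - p)) ≤ Real.log (1 - p) := by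
    have := Real.one_sub_inv_le_log_of_pos (show 0 < 1 - p by linarith)
    refine le_trans (le_of_eq ?_) this
    have : 1 - p ≠ 0 := by linarith
    field_simp
    ring
  have h2 : Real.exp (-(m * p / (1 - p))) ≤ (1 - p) ^ (m - k) := by
    calc Real.exp (-(m * p / (1 - p))) ≤ Real.exp (m * Real.log (1 - p)) := by
          refine Real.exp_le_exp.2 ?_
          have := mul_le_mul_of_nonneg_left hlog (Nat.cast_nonneg (α := ℝ) m)
          rw [mul_div_assoc]
          linarith
      _ = (1 - p) ^ m := by
          rw [Real.exp_nat_mul, Real.exp_log (by linarith)]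
      _ ≤ (1 - p) ^ (m - k) :=
          pow_le_pow_of_le_one (by linarith) (by linarith) (Nat.sub_le _ _)
  have h3 : ((m : ℝ) - k) ^ k ≤ m.choose k * k.factorial := by
    have := Nat.pow_sub_le_descFactorial m k
    rw [Nat.descFactorial_eq_factorial_mul_choose] at this
    calc ((m : ℝ) - k) ^ k ≤ ((m + 1 - k : ℕ) : ℝ) ^ k := by
          refine pow_le_pow_left₀ hmk.le ?_ _
          rw [Nat.cast_sub (by omega)]
          push_cast
          linarith
      _ ≤ m.choose k * k.factorial := by
          rw [mul_comm]
          exact_mod_cast this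
  have h4 : Real.exp (k * (1 + Real.log ((m - k) * p / k)) - 1 - Real.log k) ≤
      m.choose k * p ^ k := by
    have hfac := factorial_le_exp k hk
    have e1 : ((m : ℝ) - k) ^ k * p ^ k = Real.exp (k * Real.log ((m - k) * p)) := by
      rw [Real.exp_nat_mul, Real.exp_log (by positivity), mul_pow]
    have h5 : Real.exp (k * Real.log ((m - k) * p)) ≤
        m.choose k * p ^ k * Real.exp (k * Real.log k - k + 1 + Real.log k) := by
      rw [← e1]
      calc ((m : ℝ) - k) ^ k * p ^ k ≤ (m.choose k * k.factorial) * p ^ k :=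
            mul_le_mul_of_nonneg_right h3 (by positivity)
        _ = m.choose k * p ^ k * k.factorial := by ring
        _ ≤ _ := mul_le_mul_of_nonneg_left hfac (by positivity)
    rw [← div_le_iff₀ (Real.exp_pos _), ← Real.exp_sub] at h5
    refine le_trans (le_of_eq ?_) h5
    congr 1
    rw [Real.log_div (by positivity) hk0.ne']
    ring
  rw [sub_eq_add_neg (_ - _), Real.exp_add]
  exact mul_le_mul h4 h2 (Real.exp_pos _).le (by positivity)

end

/-! ### Independence of the inputs of the model -/

/-- Indices of the position and edge variables. -/
abbrev InputIdx : Type := {i : ℕ // 1 ≤ i} ⊕ {p : ℕ × ℕ // 1 ≤ p.1 ∧ p.1 < p.2}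

/-- The σ-algebra generated by one position or edge variable. -/
@[reducible] def inputSigma (M : Model d P) : InputIdx → MeasurableSpace Ω
  | .inl i => MeasurableSpace.comap (M.X i) inferInstance
  | .inr p => MeasurableSpace.comap (M.U p.1.1 p.1.2) inferInstance

lemma inputSigma_le (M : Model d P) (a : InputIdx) : inputSigma M a ≤ ‹MeasurableSpace Ω› := by
  rcases a with i | p
  · exact (M.X_meas i).comap_le
  · exact (M.U_meas _ _).comap_le

lemma iIndep_inputSigma (M : Model d P) : iIndep (inputSigma M) P := by
  rw [iIndep_iff]
  intro s f hf
  have hXU : Indep (MeasurableSpace.comap (fun ω => fun i : ℕ => M.X i ω) inferInstance)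
      (MeasurableSpace.comap (fun ω => fun p : ℕ × ℕ => M.U p.1 p.2 ω) inferInstance) P :=
    M.families_indep.indep (i := (0 : Fin 3)) (j := (2 : Fin 3)) (by decide)
  have hsplit : (⋂ a ∈ s, f a) =
      (⋂ i ∈ s.toLeft, f (.inl i)) ∩ ⋂ p ∈ s.toRight, f (.inr p) := by
    ext ω
    simp [Set.mem_iInter]
  have hl : MeasurableSet[MeasurableSpace.comap (fun ω => fun i : ℕ => M.X i ω) inferInstance]
      (⋂ i ∈ s.toLeft, f (.inl i)) := by
    refine Finset.measurableSet_biInter _ fun i hi => ?_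
    obtain ⟨t, ht, hte⟩ := hf _ (Finset.mem_toLeft.1 hi)
    exact ⟨(fun x => x i.1) ⁻¹' t, ht.preimage (measurable_pi_apply _), hte⟩
  have hr : MeasurableSet[MeasurableSpace.comap
      (fun ω => fun p : ℕ × ℕ => M.U p.1 p.2 ω) inferInstance]
      (⋂ p ∈ s.toRight, f (.inr p)) := by
    refine Finset.measurableSet_biInter _ fun p hp => ?_
    obtain ⟨t, ht, hte⟩ := hf _ (Finset.mem_toRight.1 hp)
    exact ⟨(fun x => x p.1) ⁻¹' t, ht.preimage (measurable_pi_apply _), hte⟩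
  rw [hsplit, (Indep_iff _ _ _).1 hXU _ _ hl hr,
    M.X_indep.meas_biInter (s := fun i => f (.inl i))
      fun i hi => hf _ (Finset.mem_toLeft.1 hi),
    M.U_indep.meas_biInter (s := fun p => f (.inr p))
      fun p hp => hf _ (Finset.mem_toRight.1 hp),
    ← Finset.prod_disjSum _ _ fun a => P (f a), Finset.toLeft_disjSum_toRight]

/-- The σ-algebra generated by a set of input variables. -/
@[reducible] def sigmaOf (M : Model d P) (S : Set InputIdx) : MeasurableSpace Ω :=
  ⨆ a ∈ S, inputSigma M a

lemma sigmaOf_le (M : Model d P) (S : Set InputIdx) : sigmaOf M S ≤ ‹MeasurableSpace Ω› :=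
  iSup₂_le fun a _ => inputSigma_le M a

lemma indepFun_of_disjoint (M : Model d P) {S T : Set InputIdx} (hST : Disjoint S T)
    {β β' : Type*} [MeasurableSpace β] [MeasurableSpace β'] {f : Ω → β} {f' : Ω → β'}
    (hf : Measurable[sigmaOf M S] f) (hf' : Measurable[sigmaOf M T] f') : IndepFun f f' P := by
  rw [IndepFun_iff_Indep]
  have h := indep_iSup_of_disjoint (inputSigma_le M) (iIndep_inputSigma M) hST
  exact indep_of_indep_of_le_left (indep_of_indep_of_le_right h hf'.comap_le) hf.comap_le

/-- The symmetrised edge variable. -/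
def edgeVar (M : Model d P) (i j : ℕ) (ω : Ω) : ℝ := M.U (min i j) (max i j) ω

lemma measurable_X_sigmaOf (M : Model d P) {S : Set InputIdx} {i : ℕ} (hi : 1 ≤ i)
    (hS : Sum.inl ⟨i, hi⟩ ∈ S) : Measurable[sigmaOf M S] (M.X i) := by
  refine Measurable.mono (comap_measurable (M.X i)) ?_ le_rfl
  exact le_iSup₂_of_le (f := fun a (_ : a ∈ S) => inputSigma M a) _ hS le_rfl

/-- The index of the edge variable of a pair of vertices. -/
def edgeIdx {i j : ℕ} (hi : 1 ≤ i) (hj : 1 ≤ j) (hij : i ≠ j) : InputIdx :=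
  Sum.inr ⟨(min i j, max i j), le_min hi hj, min_lt_max.2 hij⟩

lemma measurable_edgeVar_sigmaOf (M : Model d P) {S : Set InputIdx} {i j : ℕ} (hi : 1 ≤ i)
    (hj : 1 ≤ j) (hij : i ≠ j) (hS : edgeIdx hi hj hij ∈ S) :
    Measurable[sigmaOf M S] (edgeVar M i j) := by
  refine Measurable.mono (comap_measurable (M.U (min i j) (max i j))) ?_ le_rfl
  exact le_iSup₂_of_le (f := fun a (_ : a ∈ S) => inputSigma M a) _ hS le_rfl

/-- The indices of the input variables which do not involve the vertex `l`. -/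
def avoid (l : ℕ) : Set InputIdx :=
  {a | Sum.elim (fun i => i.1 ≠ l) (fun p => p.1.1 ≠ l ∧ p.1.2 ≠ l) a}

lemma inl_mem_avoid {l i : ℕ} (hi : 1 ≤ i) (h : i ≠ l) :
    (Sum.inl ⟨i, hi⟩ : InputIdx) ∈ avoid l := h

lemma edgeIdx_mem_avoid {l i j : ℕ} (hi : 1 ≤ i) (hj : 1 ≤ j) (hij : i ≠ j) (h : i ≠ l)
    (h' : j ≠ l) : edgeIdx hi hj hij ∈ avoid l := by
  constructor
  · rcases min_choice i j with e | e <;> simpa [e]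
  · rcases max_choice i j with e | e <;> simpa [e]

/-- The law of a position together with two independent edge variables. -/
def newLaw (d : ℕ) : Measure (EuclideanSpace ℝ (Fin d) × (ℝ × ℝ)) :=
  (volume.restrict (cube d)).prod
    ((volume.restrict (Set.Icc (0 : ℝ) 1)).prod (volume.restrict (Set.Icc (0 : ℝ) 1)))

lemma map_edgeVar (M : Model d P) {i j : ℕ} (hi : 1 ≤ i) (hj : 1 ≤ j) (hij : i ≠ j) :
    Measure.map (edgeVar M i j) P = volume.restrict (Set.Icc (0 : ℝ) 1) :=
  M.U_unif _ _ (le_min hi hj) (min_lt_max.2 hij)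

lemma edgeIdx_inj {i j l : ℕ} (hi : 1 ≤ i) (hj : 1 ≤ j) (hl : 1 ≤ l) (hij : i ≠ j)
    (hil : i ≠ l) (hjl : j ≠ l) : edgeIdx hi hl hil ≠ edgeIdx hj hl hjl := by
  intro h
  simp only [edgeIdx, Sum.inr.injEq, Subtype.mk.injEq, Prod.mk.injEq] at h
  omega

lemma map_newLaw [IsProbabilityMeasure P] (M : Model d P) {i j l : ℕ} (hi : 1 ≤ i) (hj : 1 ≤ j)
    (hl : 1 ≤ l) (hij : i ≠ j) (hil : i ≠ l) (hjl : j ≠ l) :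
    Measure.map (fun ω => (M.X l ω, (edgeVar M i l ω, edgeVar M j l ω))) P = newLaw d := by
  have h1 : IndepFun (edgeVar M i l) (edgeVar M j l) P :=
    indepFun_of_disjoint M
      (Set.disjoint_singleton.2 (edgeIdx_inj hi hj hl hij hil hjl))
      (measurable_edgeVar_sigmaOf M hi hl hil (Set.mem_singleton _))
      (measurable_edgeVar_sigmaOf M hj hl hjl (Set.mem_singleton _))
  have h2 : IndepFun (M.X l) (fun ω => (edgeVar M i l ω, edgeVar M j l ω)) P := by
    refine indepFun_of_disjoint M (S := {Sum.inl ⟨l, hl⟩})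
      (T := {edgeIdx hi hl hil, edgeIdx hj hl hjl}) ?_
      (measurable_X_sigmaOf M hl (Set.mem_singleton _)) ?_
    · simp [edgeIdx]
    · exact Measurable.prodMk
        (measurable_edgeVar_sigmaOf M hi hl hil (by simp))
        (measurable_edgeVar_sigmaOf M hj hl hjl (by simp))
  have mi : Measurable (edgeVar M i l) := M.U_meas _ _
  have mj : Measurable (edgeVar M j l) := M.U_meas _ _
  rw [h2.map_prod_eq_prod_map_map (M.X_meas l).aemeasurable (mi.prodMk mj).aemeasurable,
    h1.map_prod_eq_prod_map_map mi.aemeasurable mj.aemeasurable, M.X_unif l hl,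
    map_edgeVar M hi hl hil, map_edgeVar M hj hl hjl, newLaw]

instance : IsProbabilityMeasure (volume.restrict (Set.Icc (0 : ℝ) 1)) := ⟨by simp⟩

/-- Revealing a new vertex `l` and its edge variables to `i` and `j`, conditionally on everything
which does not involve `l`. -/
lemma measure_inter_new [IsProbabilityMeasure P] (M : Model d P) {i j l : ℕ} (hi : 1 ≤ i)
    (hj : 1 ≤ j) (hl : 1 ≤ l) (hij : i ≠ j) (hil : i ≠ l) (hjl : j ≠ l) {E : Set Ω}
    (hE : MeasurableSet[sigmaOf M (avoid l)] E)
    {S : Set ((EuclideanSpace ℝ (Fin d) × EuclideanSpace ℝ (Fin d)) ×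
      (EuclideanSpace ℝ (Fin d) × (ℝ × ℝ)))} (hS : MeasurableSet S) :
    P (E ∩ {ω | ((M.X i ω, M.X j ω), (M.X l ω, (edgeVar M i l ω, edgeVar M j l ω))) ∈ S}) =
      ∫⁻ ω in E, newLaw d {q | ((M.X i ω, M.X j ω), q) ∈ S} ∂P := by
  set Y := fun ω => (M.X l ω, (edgeVar M i l ω, edgeVar M j l ω)) with hY
  set W : Ω → (EuclideanSpace ℝ (Fin d) × EuclideanSpace ℝ (Fin d)) × Prop :=
    fun ω => ((M.X i ω, M.X j ω), ω ∈ E) with hW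
  have hWm : Measurable[sigmaOf M (avoid l)] W := by
    refine Measurable.prodMk (Measurable.prodMk
      (measurable_X_sigmaOf M hi (inl_mem_avoid hi hil))
      (measurable_X_sigmaOf M hj (inl_mem_avoid hj hjl))) ?_
    exact (@measurableSet_setOfPred Ω (sigmaOf M (avoid l)) (fun ω => ω ∈ E)).1 hE
  have hYm : Measurable[sigmaOf M (avoid l)ᶜ] Y := by
    refine Measurable.prodMk (measurable_X_sigmaOf M hl ?_) (Measurable.prodMk
      (measurable_edgeVar_sigmaOf M hi hl hil ?_) (measurable_edgeVar_sigmaOf M hj hl hjl ?_))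
    · simp [avoid]
    · simp only [avoid, edgeIdx, Set.mem_compl_iff, Set.mem_ofPred_eq, Sum.elim_inr]
      omega
    · simp only [avoid, edgeIdx, Set.mem_compl_iff, Set.mem_ofPred_eq, Sum.elim_inr]
      omega
  have hWY : IndepFun W Y P := indepFun_of_disjoint M disjoint_compl_right hWm hYm
  have hWm' : Measurable W := hWm.mono (sigmaOf_le _ _) le_rfl
  have hYm' : Measurable Y := hYm.mono (sigmaOf_le _ _) le_rfl
  have hE' : MeasurableSet E := sigmaOf_le _ _ _ hE
  have hmap := hWY.map_prod_eq_prod_map_map hWm'.aemeasurable hYm'.aemeasurable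
  have hYlaw : Measure.map Y P = newLaw d := map_newLaw M hi hj hl hij hil hjl
  rw [hYlaw] at hmap
  have : SFinite (newLaw d) := by unfold newLaw; infer_instance
  set S' : Set (((EuclideanSpace ℝ (Fin d) × EuclideanSpace ℝ (Fin d)) × Prop) ×
      (EuclideanSpace ℝ (Fin d) × (ℝ × ℝ))) := {w | w.1.2 ∧ (w.1.1, w.2) ∈ S} with hS'
  have hS'm : MeasurableSet S' := by
    refine MeasurableSet.inter (measurableSet_setOfPred.2 (by fun_prop)) ?_
    exact hS.preimage (by fun_prop)
  have e1 : E ∩ {ω | ((M.X i ω, M.X j ω), Y ω) ∈ S} = (fun ω => (W ω, Y ω)) ⁻¹' S' := by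
    ext ω; simp [hW, hS']
  rw [e1, ← Measure.map_apply (hWm'.prodMk hYm') hS'm, hmap, Measure.prod_apply hS'm,
    lintegral_map (measurable_measure_prodMk_left hS'm) hWm', ← lintegral_indicator hE']
  refine lintegral_congr fun ω => ?_
  by_cases hω : ω ∈ E
  · simp only [Set.indicator_of_mem hω]
    congr 1
    ext q
    simp [hS', hW, hω]
  · simp only [Set.indicator_of_notMem hω]
    have : Prod.mk (W ω) ⁻¹' S' = ∅ := by
      ext q
      simp [hS', hW, hω]
    rw [this, measure_empty]

lemma measure_inter_new_pred [IsProbabilityMeasure P] (M : Model d P) {i j l : ℕ} (hi : 1 ≤ i)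
    (hj : 1 ≤ j) (hl : 1 ≤ l) (hij : i ≠ j) (hil : i ≠ l) (hjl : j ≠ l) {E : Set Ω}
    (hE : MeasurableSet[sigmaOf M (avoid l)] E)
    (p : EuclideanSpace ℝ (Fin d) → EuclideanSpace ℝ (Fin d) → EuclideanSpace ℝ (Fin d) →
      ℝ → ℝ → Prop)
    (hp : Measurable fun w : (EuclideanSpace ℝ (Fin d) × EuclideanSpace ℝ (Fin d)) ×
      (EuclideanSpace ℝ (Fin d) × (ℝ × ℝ)) => p w.1.1 w.1.2 w.2.1 w.2.2.1 w.2.2.2) :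
    P (E ∩ {ω | p (M.X i ω) (M.X j ω) (M.X l ω) (edgeVar M i l ω) (edgeVar M j l ω)}) =
      ∫⁻ ω in E, newLaw d {q | p (M.X i ω) (M.X j ω) q.1 q.2.1 q.2.2} ∂P :=
  measure_inter_new M hi hj hl hij hil hjl hE (measurableSet_setOfPred.2 hp)

/-! ### Connection probabilities -/

/-- The connection function, extended to the left of `0` by its value at `0`. -/
def connFun (M : Model d P) (t : ℝ) : ℝ := M.g (max t 0)

lemma connFun_of_nonneg (M : Model d P) {t : ℝ} (ht : 0 ≤ t) : connFun M t = M.g t := by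
  rw [connFun, max_eq_left ht]

lemma connFun_antitone (M : Model d P) : Antitone (connFun M) := fun _ _ hab =>
  M.g_antitone (Set.mem_Ici.2 (le_max_right _ _)) (Set.mem_Ici.2 (le_max_right _ _))
    (max_le_max_right 0 hab)

lemma measurable_connFun (M : Model d P) : Measurable (connFun M) :=
  (connFun_antitone M).measurable

lemma connFun_nonneg (M : Model d P) (t : ℝ) : 0 ≤ connFun M t :=
  (M.g_mem _ (le_max_right _ _)).1

lemma connFun_le_one (M : Model d P) (t : ℝ) : connFun M t ≤ 1 :=
  (M.g_mem _ (le_max_right _ _)).2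

/-- The probability that two given vertices are joined at scale `r`. -/
def connProb (M : Model d P) (r : ℝ) : ℝ :=
  ∫ y in cube d, connFun M (‖y‖ / r)

lemma isProbabilityMeasure_cube [IsProbabilityMeasure P] (M : Model d P) :
    IsProbabilityMeasure (volume.restrict (cube d)) := by
  rw [← M.X_unif 1 le_rfl]
  exact Measure.isProbabilityMeasure_map (M.X_meas 1).aemeasurable

lemma integrable_connFun [IsProbabilityMeasure P] (M : Model d P) (r : ℝ) :
    Integrable (fun y : EuclideanSpace ℝ (Fin d) => connFun M (‖y‖ / r))
      (volume.restrict (cube d)) := by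
  have := isProbabilityMeasure_cube M
  refine Integrable.of_bound
    ((measurable_connFun M).comp (by fun_prop)).aestronglyMeasurable 1 ?_
  refine Eventually.of_forall fun y => ?_
  rw [Real.norm_eq_abs, abs_of_nonneg (connFun_nonneg M _)]
  exact connFun_le_one M _

lemma connProb_nonneg (M : Model d P) (r : ℝ) : 0 ≤ connProb M r :=
  integral_nonneg fun _ => connFun_nonneg M _

lemma connProb_le_one [IsProbabilityMeasure P] (M : Model d P) (r : ℝ) : connProb M r ≤ 1 := by
  have := isProbabilityMeasure_cube M
  calc connProb M r ≤ ∫ _y in cube d, (1 : ℝ) :=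
        integral_mono (integrable_connFun M r) (integrable_const _) fun _ => connFun_le_one M _
    _ = 1 := by simp

lemma lintegral_connFun_torusDist [IsProbabilityMeasure P] (M : Model d P) (r : ℝ)
    (x : EuclideanSpace ℝ (Fin d)) :
    ∫⁻ y in cube d, ENNReal.ofReal (connFun M (torusDist x y / r)) =
      ENNReal.ofReal (connProb M r) := by
  rw [lintegral_cube_torusDist (fun t => ENNReal.ofReal (connFun M (t / r))), connProb,
    ofReal_integral_eq_lintegral_ofReal (integrable_connFun M r)
      (Eventually.of_forall fun _ => connFun_nonneg M _)]

lemma volume_restrict_Icc_Iic {a : ℝ} (h1 : a ≤ 1) :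
    volume.restrict (Set.Icc (0 : ℝ) 1) (Set.Iic a) = ENNReal.ofReal a := by
  rw [Measure.restrict_apply measurableSet_Iic]
  have : Set.Iic a ∩ Set.Icc (0 : ℝ) 1 = Set.Icc 0 a := by
    ext t
    simp only [Set.mem_inter_iff, Set.mem_Iic, Set.mem_Icc]
    constructor
    · rintro ⟨h, h', -⟩; exact ⟨h', h⟩
    · rintro ⟨h, h'⟩; exact ⟨h', h, h'.trans h1⟩
  rw [this, Real.volume_Icc, sub_zero]

lemma newLaw_one {a : EuclideanSpace ℝ (Fin d) → ℝ} (ha : Measurable a)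
    (h1 : ∀ y, a y ≤ 1) :
    newLaw d {q | q.2.1 ≤ a q.1} = ∫⁻ y in cube d, ENNReal.ofReal (a y) := by
  have hm : MeasurableSet {q : EuclideanSpace ℝ (Fin d) × (ℝ × ℝ) | q.2.1 ≤ a q.1} :=
    measurableSet_le (by fun_prop) (by fun_prop)
  rw [newLaw, Measure.prod_apply hm]
  refine lintegral_congr fun y => ?_
  have : Prod.mk y ⁻¹' {q : EuclideanSpace ℝ (Fin d) × (ℝ × ℝ) | q.2.1 ≤ a q.1} =
      Set.Iic (a y) ×ˢ Set.univ := by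
    ext q; simp
  rw [this, Measure.prod_prod, volume_restrict_Icc_Iic (h1 y), measure_univ, mul_one]

lemma newLaw_two {a b : EuclideanSpace ℝ (Fin d) → ℝ} (ha : Measurable a) (hb : Measurable b)
    (h1 : ∀ y, a y ≤ 1) (h1' : ∀ y, b y ≤ 1) :
    newLaw d {q | q.2.1 ≤ a q.1 ∧ q.2.2 ≤ b q.1} =
      ∫⁻ y in cube d, ENNReal.ofReal (a y) * ENNReal.ofReal (b y) := by
  have hm : MeasurableSet {q : EuclideanSpace ℝ (Fin d) × (ℝ × ℝ) |
      q.2.1 ≤ a q.1 ∧ q.2.2 ≤ b q.1} := by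
    rw [Set.ofPred_and]
    exact (measurableSet_le (by fun_prop) (by fun_prop)).inter
      (measurableSet_le (by fun_prop) (by fun_prop))
  rw [newLaw, Measure.prod_apply hm]
  refine lintegral_congr fun y => ?_
  have : Prod.mk y ⁻¹' {q : EuclideanSpace ℝ (Fin d) × (ℝ × ℝ) |
      q.2.1 ≤ a q.1 ∧ q.2.2 ≤ b q.1} = Set.Iic (a y) ×ˢ Set.Iic (b y) := by
    ext q; simp [Prod.le_def]
  rw [this, Measure.prod_prod, volume_restrict_Icc_Iic (h1 y),
    volume_restrict_Icc_Iic (h1' y)]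

/-- The event that `i` and `j` satisfy the connection rule at scale `r`. -/
def edgeSet (M : Model d P) (r : ℝ) (i j : ℕ) : Set Ω :=
  {ω | edgeVar M i j ω ≤ connFun M (torusDist (M.X i ω) (M.X j ω) / r)}

lemma measurable_torusDist_comp {δ : Type*} {mδ : MeasurableSpace δ}
    {f h : δ → EuclideanSpace ℝ (Fin d)} (hf : Measurable f) (hh : Measurable h) :
    Measurable fun w => torusDist (f w) (h w) := by
  simp only [torusDist_eq]
  exact Measurable.iInf fun z => by fun_prop

lemma measurable_connFun_torusDist (M : Model d P) (r : ℝ) {δ : Type*} {mδ : MeasurableSpace δ}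
    {f h : δ → EuclideanSpace ℝ (Fin d)} (hf : Measurable f) (hh : Measurable h) :
    Measurable fun w => connFun M (torusDist (f w) (h w) / r) :=
  (measurable_connFun M).comp ((measurable_torusDist_comp hf hh).div_const r)

lemma measurableSet_edgeSet (M : Model d P) {r : ℝ} {S : Set InputIdx} {i j : ℕ} (hi : 1 ≤ i)
    (hj : 1 ≤ j) (hij : i ≠ j) (hSi : Sum.inl ⟨i, hi⟩ ∈ S) (hSj : Sum.inl ⟨j, hj⟩ ∈ S)
    (hSij : edgeIdx hi hj hij ∈ S) : MeasurableSet[sigmaOf M S] (edgeSet M r i j) := by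
  exact measurableSet_le (mδ := sigmaOf M S)
    (measurable_edgeVar_sigmaOf M hi hj hij hSij)
    (@measurable_connFun_torusDist _ _ _ _ M r _ (sigmaOf M S) _ _
      (measurable_X_sigmaOf M hi hSi) (measurable_X_sigmaOf M hj hSj))

lemma measureReal_inter_edgeSet [IsProbabilityMeasure P] (M : Model d P) (r : ℝ) {i l : ℕ}
    (hi : 1 ≤ i) (hl : 1 ≤ l) (hil : i ≠ l) {E : Set Ω}
    (hE : MeasurableSet[sigmaOf M (avoid l)] E) :
    P.real (E ∩ edgeSet M r i l) = connProb M r * P.real E := by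
  have h := measure_inter_new_pred M hi (show 1 ≤ i + l by omega) hl (by omega) hil (by omega) hE
    (fun x _ y u _ => u ≤ connFun M (torusDist x y / r))
    (Measurable.le' (by fun_prop)
      (measurable_connFun_torusDist M r measurable_fst.fst measurable_snd.fst))
  have h2 : P (E ∩ edgeSet M r i l) = ENNReal.ofReal (connProb M r) * P E := by
    refine h.trans ?_
    rw [← setLIntegral_const]
    refine lintegral_congr fun ω => ?_
    rw [← lintegral_connFun_torusDist M r (M.X i ω)]
    exact newLaw_one (a := fun y => connFun M (torusDist (M.X i ω) y / r))
      (measurable_connFun_torusDist M r measurable_const measurable_id) fun _ => connFun_le_one M _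
  rw [measureReal_def, h2, ENNReal.toReal_mul, ENNReal.toReal_ofReal (connProb_nonneg M r),
    measureReal_def]

lemma measureReal_inter_edgeSet_edgeSet_le [IsProbabilityMeasure P] (M : Model d P) {r D : ℝ}
    (hr : 0 < r) {i j l : ℕ} (hi : 1 ≤ i) (hj : 1 ≤ j) (hl : 1 ≤ l) (hij : i ≠ j) (hil : i ≠ l)
    (hjl : j ≠ l) {E : Set Ω} (hE : MeasurableSet[sigmaOf M (avoid l)] E)
    (hfar : E ⊆ {ω | 2 * D * r ≤ torusDist (M.X i ω) (M.X j ω)}) :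
    P.real (E ∩ edgeSet M r i l ∩ edgeSet M r j l) ≤ connFun M D := by
  have := isProbabilityMeasure_cube M
  have h := measure_inter_new_pred M hi hj hl hij hil hjl hE
    (fun x x' y u v => u ≤ connFun M (torusDist x y / r) ∧ v ≤ connFun M (torusDist x' y / r))
    (Measurable.and
      (Measurable.le' (by fun_prop)
        (measurable_connFun_torusDist M r measurable_fst.fst measurable_snd.fst))
      (Measurable.le' (by fun_prop)
        (measurable_connFun_torusDist M r measurable_fst.snd measurable_snd.fst)))
  have h2 : P (E ∩ edgeSet M r i l ∩ edgeSet M r j l) ≤ ENNReal.ofReal (connFun M D) := by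
    rw [Set.inter_assoc]
    refine h.trans_le ?_
    have hE' : MeasurableSet E := sigmaOf_le _ _ _ hE
    calc _ ≤ ∫⁻ _ω in E, ENNReal.ofReal (connFun M D) ∂P := by
          refine setLIntegral_mono' hE' fun ω hω => ?_
          have e := newLaw_two (a := fun y => connFun M (torusDist (M.X i ω) y / r))
            (b := fun y => connFun M (torusDist (M.X j ω) y / r))
            (measurable_connFun_torusDist M r measurable_const measurable_id)
            (measurable_connFun_torusDist M r measurable_const measurable_id)
            (fun _ => connFun_le_one M _) (fun _ => connFun_le_one M _)
          refine e.trans_le ?_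
          calc _ ≤ ∫⁻ _y in cube d, ENNReal.ofReal (connFun M D) := by
                refine lintegral_mono fun y => ?_
                have ht := (hfar hω).trans (torusDist_triangle (M.X i ω) (M.X j ω) y)
                have hone : ∀ t, ENNReal.ofReal (connFun M t) ≤ 1 := fun t =>
                  ENNReal.ofReal_le_one.2 (connFun_le_one M t)
                rcases le_total (D * r) (torusDist (M.X i ω) y) with hD | hD
                · refine (mul_le_mul' (ENNReal.ofReal_le_ofReal (connFun_antitone M ?_))
                    (hone _)).trans_eq (mul_one _)
                  rwa [le_div_iff₀ hr]
                · refine (mul_le_mul' (hone _)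
                    (ENNReal.ofReal_le_ofReal (connFun_antitone M ?_))).trans_eq (one_mul _)
                  rw [le_div_iff₀ hr]
                  linarith
            _ = ENNReal.ofReal (connFun M D) := by simp
      _ = ENNReal.ofReal (connFun M D) * P E := setLIntegral_const _ _
      _ ≤ ENNReal.ofReal (connFun M D) := mul_le_of_le_one_right' prob_le_one
  exact ENNReal.toReal_le_of_le_ofReal (connFun_nonneg M D) h2

lemma measureReal_torusDist_lt_le [IsProbabilityMeasure P] (M : Model d P) {R : ℝ} (hR : 0 < R)
    {i j : ℕ} (hi : 1 ≤ i) (hj : 1 ≤ j) (hij : i ≠ j) :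
    P.real {ω | torusDist (M.X i ω) (M.X j ω) < R} ≤
      R ^ d * volume.real (Metric.ball (0 : EuclideanSpace ℝ (Fin d)) 1) := by
  have h := measure_inter_new_pred M hi (show 1 ≤ i + j by omega) hj (by omega) hij (by omega)
    (E := Set.univ) MeasurableSet.univ
    (fun x _ y _ _ => torusDist x y < R)
    (measurableSet_setOfPred.1 (measurableSet_lt
      (measurable_torusDist_comp measurable_fst.fst measurable_snd.fst) measurable_const))
  have h2 : P {ω | torusDist (M.X i ω) (M.X j ω) < R} ≤
      volume (Metric.ball (0 : EuclideanSpace ℝ (Fin d)) R) := by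
    rw [Set.univ_inter] at h
    refine h.trans_le ?_
    calc _ ≤ ∫⁻ _ω in Set.univ, volume (Metric.ball (0 : EuclideanSpace ℝ (Fin d)) R) ∂P := by
          refine lintegral_mono fun ω => ?_
          have hms : MeasurableSet {y | torusDist (M.X i ω) y < R} :=
            measurableSet_lt (measurable_torusDist_comp measurable_const measurable_id)
              measurable_const
          have e : {q : EuclideanSpace ℝ (Fin d) × (ℝ × ℝ) | torusDist (M.X i ω) q.1 < R} =
              {y | torusDist (M.X i ω) y < R} ×ˢ Set.univ := by
            ext q; simp
          change newLaw d {q : EuclideanSpace ℝ (Fin d) × (ℝ × ℝ) |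
            torusDist (M.X i ω) q.1 < R} ≤ _
          rw [e, newLaw, Measure.prod_prod, measure_univ, mul_one,
            ← lintegral_indicator_one hms]
          have e2 := lintegral_cube_torusDist ((Set.Iio R).indicator 1) (M.X i ω)
          refine (le_of_eq ?_).trans (e2.le.trans ?_)
          · exact lintegral_congr fun y => by simp [Set.indicator]
          · refine (setLIntegral_le_lintegral _ _).trans ?_
            rw [← lintegral_indicator_one Metric.isOpen_ball.measurableSet]
            exact lintegral_mono fun y => by simp [Set.indicator]
      _ = _ := by simp
  rw [measureReal_def, measureReal_def]
  refine (ENNReal.toReal_mono (measure_ball_lt_top).ne h2).trans_eq ?_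
  rw [Measure.addHaar_ball_of_pos _ _ hR, ENNReal.toReal_mul, ENNReal.toReal_ofReal (by positivity)]
  simp

/-! ### Counting neighbours -/

open Classical in
/-- The number of vertices of `J` which are joined to `i` at scale `r`. -/
def cnt (M : Model d P) (r : ℝ) (i : ℕ) (J : Finset ℕ) (ω : Ω) : ℕ :=
  (J.filter fun l => ω ∈ edgeSet M r i l).card

/-- The event that `i` has fewer than `s` neighbours in `J`. -/
def cntLt (M : Model d P) (r : ℝ) (i : ℕ) (J : Finset ℕ) (s : ℕ) : Set Ω :=
  {ω | cnt M r i J ω < s}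

lemma mem_cntLt {M : Model d P} {r : ℝ} {i : ℕ} {J : Finset ℕ} {s : ℕ} {ω : Ω} :
    ω ∈ cntLt M r i J s ↔ cnt M r i J ω < s := Iff.rfl

lemma cnt_insert_of_mem {M : Model d P} {r : ℝ} {i l : ℕ} {J : Finset ℕ} {ω : Ω} (hl : l ∉ J)
    (h : ω ∈ edgeSet M r i l) : cnt M r i (insert l J) ω = cnt M r i J ω + 1 := by
  classical
  rw [cnt, Finset.filter_insert, if_pos h, Finset.card_insert_of_notMem (by simp [hl]), cnt]

lemma cnt_insert_of_notMem {M : Model d P} {r : ℝ} {i l : ℕ} {J : Finset ℕ} {ω : Ω}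
    (h : ω ∉ edgeSet M r i l) : cnt M r i (insert l J) ω = cnt M r i J ω := by
  classical
  rw [cnt, Finset.filter_insert, if_neg h, cnt]

lemma cnt_mono {M : Model d P} {r : ℝ} {i : ℕ} {J K : Finset ℕ} {ω : Ω} (h : J ⊆ K) :
    cnt M r i J ω ≤ cnt M r i K ω := by
  classical
  rw [cnt, cnt]
  exact Finset.card_le_card (Finset.filter_subset_filter _ h)

lemma cntLt_zero (M : Model d P) (r : ℝ) (i : ℕ) (J : Finset ℕ) : cntLt M r i J 0 = ∅ := by
  ext ω; simp [mem_cntLt]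

lemma cntLt_empty_succ (M : Model d P) (r : ℝ) (i s : ℕ) :
    cntLt M r i ∅ (s + 1) = Set.univ := by
  ext ω; simp [mem_cntLt, cnt]

lemma cntLt_insert_succ (M : Model d P) (r : ℝ) (i s : ℕ) {l : ℕ} {J : Finset ℕ} (hl : l ∉ J) :
    cntLt M r i (insert l J) (s + 1) =
      (cntLt M r i J s ∩ edgeSet M r i l) ∪ (cntLt M r i J (s + 1) \ edgeSet M r i l) := by
  ext ω
  by_cases h : ω ∈ edgeSet M r i l
  · simp [mem_cntLt, cnt_insert_of_mem hl h, h]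
  · simp [mem_cntLt, cnt_insert_of_notMem h, h]

lemma measurableSet_cntLt_avoid (M : Model d P) (r : ℝ) {i l : ℕ} (hi : 1 ≤ i) (hil : i ≠ l)
    {J : Finset ℕ} (hJ : ∀ j ∈ J, 1 ≤ j) (hiJ : i ∉ J) (hlJ : l ∉ J) (s : ℕ) :
    MeasurableSet[sigmaOf M (avoid l)] (cntLt M r i J s) := by
  induction J using Finset.induction_on generalizing s with
  | empty =>
    rcases s with _ | s
    · rw [cntLt_zero]; exact @MeasurableSet.empty _ (sigmaOf M (avoid l))
    · rw [cntLt_empty_succ]; exact @MeasurableSet.univ _ (sigmaOf M (avoid l))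
  | insert a J ha ih =>
    simp only [Finset.mem_insert, forall_eq_or_imp, not_or] at hJ hiJ hlJ
    have hs := ih hJ.2 hiJ.2 hlJ.2
    have he : MeasurableSet[sigmaOf M (avoid l)] (edgeSet M r i a) :=
      measurableSet_edgeSet M hi hJ.1 hiJ.1 (inl_mem_avoid hi hil)
        (inl_mem_avoid hJ.1 (Ne.symm hlJ.1))
        (edgeIdx_mem_avoid hi hJ.1 hiJ.1 hil (Ne.symm hlJ.1))
    rcases s with _ | s
    · rw [cntLt_zero]; exact @MeasurableSet.empty _ (sigmaOf M (avoid l))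
    · rw [cntLt_insert_succ M r i s ha]
      exact @MeasurableSet.union _ (sigmaOf M (avoid l)) _ _
        (@MeasurableSet.inter _ (sigmaOf M (avoid l)) _ _ (hs s) he)
        (@MeasurableSet.diff _ (sigmaOf M (avoid l)) _ _ (hs (s + 1)) he)

lemma measurableSet_edgeSet' (M : Model d P) (r : ℝ) {i j : ℕ} (hi : 1 ≤ i) (hj : 1 ≤ j)
    (hij : i ≠ j) : MeasurableSet (edgeSet M r i j) :=
  sigmaOf_le M Set.univ _
    (measurableSet_edgeSet M hi hj hij (Set.mem_univ _) (Set.mem_univ _) (Set.mem_univ _))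

lemma measurableSet_cntLt (M : Model d P) (r : ℝ) {i : ℕ} (hi : 1 ≤ i)
    {J : Finset ℕ} (hJ : ∀ j ∈ J, 1 ≤ j) (hiJ : i ∉ J) (s : ℕ) :
    MeasurableSet (cntLt M r i J s) := by
  obtain ⟨l, hl⟩ := Infinite.exists_notMem_finset (insert i J)
  simp only [Finset.mem_insert, not_or] at hl
  exact sigmaOf_le M _ _ (measurableSet_cntLt_avoid M r hi (Ne.symm hl.1) hJ hiJ hl.2 s)

lemma measureReal_inter_cntLt [IsProbabilityMeasure P] (M : Model d P) (r : ℝ) {i : ℕ}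
    (hi : 1 ≤ i) {J : Finset ℕ} (hJ : ∀ j ∈ J, 1 ≤ j) (hiJ : i ∉ J) {E : Set Ω}
    (hE : ∀ l ∈ J, MeasurableSet[sigmaOf M (avoid l)] E) (s : ℕ) :
    P.real (E ∩ cntLt M r i J s) = binLt (connProb M r) J.card s * P.real E := by
  induction J using Finset.induction_on generalizing s with
  | empty =>
    rcases s with _ | s
    · simp [cntLt_zero]
    · simp [cntLt_empty_succ]
  | insert l J hl ih =>
    simp only [Finset.mem_insert, forall_eq_or_imp, not_or] at hJ hiJ hE
    rcases s with _ | s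
    · simp [cntLt_zero]
    have hmE : ∀ t, MeasurableSet[sigmaOf M (avoid l)] (E ∩ cntLt M r i J t) := fun t =>
      @MeasurableSet.inter _ (sigmaOf M (avoid l)) _ _ hE.1
        (measurableSet_cntLt_avoid M r hi hiJ.1 hJ.2 hiJ.2 hl t)
    have he := measurableSet_edgeSet' M r hi hJ.1 hiJ.1
    have e : E ∩ cntLt M r i (insert l J) (s + 1) =
        (E ∩ cntLt M r i J s ∩ edgeSet M r i l) ∪
          ((E ∩ cntLt M r i J (s + 1)) \ edgeSet M r i l) := by
      rw [cntLt_insert_succ M r i s hl, Set.inter_union_distrib_left, Set.inter_assoc,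
        Set.inter_sdiff_assoc]
    have hdis : Disjoint (E ∩ cntLt M r i J s ∩ edgeSet M r i l)
          ((E ∩ cntLt M r i J (s + 1)) \ edgeSet M r i l) :=
      Set.disjoint_of_subset_left Set.inter_subset_right Set.disjoint_sdiff_right
    have h1 := measureReal_inter_edgeSet M r hi hJ.1 hiJ.1 (hmE s)
    have h2 := measureReal_inter_edgeSet M r hi hJ.1 hiJ.1 (hmE (s + 1))
    have h3 := measureReal_inter_add_sdiff (μ := P) (s := (E ∩ cntLt M r i J (s + 1))) he
    rw [e, measureReal_union hdis ((sigmaOf_le M _ _ (hmE (s + 1))).diff he), h1,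
      Finset.card_insert_of_notMem hl, binLt_succ_succ]
    rw [h2, ih hJ.2 hiJ.2 hE.2] at h3
    rw [ih hJ.2 hiJ.2 hE.2]
    linear_combination h3

lemma measureReal_inter_cntLt_cntLt_le [IsProbabilityMeasure P] (M : Model d P) {r D : ℝ}
    (hr : 0 < r) (hp : connProb M r ≤ 1 / 2) {i j : ℕ} (hi : 1 ≤ i) (hj : 1 ≤ j) (hij : i ≠ j)
    {J : Finset ℕ} (hJ : ∀ j ∈ J, 1 ≤ j) (hiJ : i ∉ J) (hjJ : j ∉ J) {E : Set Ω}
    (hE : ∀ l ∈ J, MeasurableSet[sigmaOf M (avoid l)] E)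
    (hfar : E ⊆ {ω | 2 * D * r ≤ torusDist (M.X i ω) (M.X j ω)}) (s t : ℕ) :
    P.real (E ∩ cntLt M r i J s ∩ cntLt M r j J t) ≤
      binLt (connProb M r) J.card s * binLt (connProb M r) J.card t + J.card * connFun M D := by
  have hp0 := connProb_nonneg M r
  have hp1 := connProb_le_one M r
  have hg0 := connFun_nonneg M D
  induction J using Finset.induction_on generalizing s t with
  | empty =>
    rcases s with _ | s
    · simp [cntLt_zero]
    rcases t with _ | t
    · simp [cntLt_zero]
    · simp [cntLt_empty_succ]
  | insert l J hl ih =>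
    have hbn := fun a => binLt_nonneg hp0 hp1 (insert l J).card a
    rcases s with _ | s
    · simp only [cntLt_zero, Set.inter_empty, Set.empty_inter, measureReal_empty]
      have := mul_nonneg (hbn 0) (hbn t)
      positivity
    rcases t with _ | t
    · simp only [cntLt_zero, Set.inter_empty, measureReal_empty]
      have := mul_nonneg (hbn (s + 1)) (hbn 0)
      positivity
    simp only [Finset.mem_insert, forall_eq_or_imp, not_or] at hJ hiJ hjJ hE
    set A : ℕ → ℕ → Set Ω := fun a b => E ∩ cntLt M r i J a ∩ cntLt M r j J b with hA
    have hm : ∀ a b, MeasurableSet[sigmaOf M (avoid l)] (A a b) := fun a b =>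
      @MeasurableSet.inter _ (sigmaOf M (avoid l)) _ _
        (@MeasurableSet.inter _ (sigmaOf M (avoid l)) _ _ hE.1
          (measurableSet_cntLt_avoid M r hi hiJ.1 hJ.2 hiJ.2 hl a))
        (measurableSet_cntLt_avoid M r hj hjJ.1 hJ.2 hjJ.2 hl b)
    have hei := measurableSet_edgeSet' M r hi hJ.1 hiJ.1
    have hej := measurableSet_edgeSet' M r hj hJ.1 hjJ.1
    have hIH := ih hJ.2 hiJ.2 hjJ.2 hE.2
    set ei := edgeSet M r i l
    set ej := edgeSet M r j l
    have hi' : ∀ a b, P.real (A a b ∩ ei) = connProb M r * P.real (A a b) := fun a b =>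
      measureReal_inter_edgeSet M r hi hJ.1 hiJ.1 (hm a b)
    have hj' : ∀ a b, P.real (A a b ∩ ej) = connProb M r * P.real (A a b) := fun a b =>
      measureReal_inter_edgeSet M r hj hJ.1 hjJ.1 (hm a b)
    have hboth : P.real (A (s + 1) (t + 1) ∩ ei ∩ ej) ≤ connFun M D :=
      measureReal_inter_edgeSet_edgeSet_le M hr hi hj hJ.1 hij hiJ.1 hjJ.1 (hm _ _)
        ((Set.inter_subset_left.trans Set.inter_subset_left).trans hfar)
    have hmono : P.real (A s t ∩ ei ∩ ej) ≤ P.real (A s (t + 1) ∩ ei ∩ ej) := by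
      refine measureReal_mono fun ω hω => ?_
      simp only [hA, Set.mem_inter_iff, mem_cntLt] at hω ⊢
      exact ⟨⟨⟨hω.1.1.1, by omega⟩, hω.1.2⟩, hω.2⟩
    have hcover : E ∩ cntLt M r i (insert l J) (s + 1) ∩ cntLt M r j (insert l J) (t + 1) ⊆
        (A s t ∩ ei ∩ ej) ∪ ((A s (t + 1) ∩ ei) \ ej) ∪ ((A (s + 1) t ∩ ej) \ ei) ∪
          ((A (s + 1) (t + 1) \ ei) \ ej) := by
      rw [cntLt_insert_succ M r i s hl, cntLt_insert_succ M r j t hl]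
      rintro ω ⟨⟨hω, h1⟩, h2⟩
      rcases h1 with ⟨h1, h1'⟩ | ⟨h1, h1'⟩ <;> rcases h2 with ⟨h2, h2'⟩ | ⟨h2, h2'⟩
      · exact Or.inl (Or.inl (Or.inl ⟨⟨⟨⟨hω, h1⟩, h2⟩, h1'⟩, h2'⟩))
      · exact Or.inl (Or.inl (Or.inr ⟨⟨⟨⟨hω, h1⟩, h2⟩, h1'⟩, h2'⟩))
      · exact Or.inl (Or.inr ⟨⟨⟨⟨hω, h1⟩, h2⟩, h2'⟩, h1'⟩)
      · exact Or.inr ⟨⟨⟨⟨hω, h1⟩, h2⟩, h1'⟩, h2'⟩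
    have h01 := measureReal_inter_add_sdiff (μ := P) (s := (A s (t + 1) ∩ ei)) hej
    have h10 := measureReal_inter_add_sdiff (μ := P) (s := (A (s + 1) t ∩ ej)) hei
    have h11 := measureReal_inter_add_sdiff (μ := P) (s := (A (s + 1) (t + 1))) hei
    have h11' := measureReal_inter_add_sdiff (μ := P) (s := (A (s + 1) (t + 1) \ ei)) hej
    have h11'' := measureReal_inter_add_sdiff (μ := P) (s := (A (s + 1) (t + 1) ∩ ej)) hei
    have hmono' : P.real (A (s + 1) (t + 1) ∩ ej ∩ ei) = P.real (A (s + 1) (t + 1) ∩ ei ∩ ej) := by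
      rw [Set.inter_right_comm]
    have hcomm : P.real ((A (s + 1) (t + 1) \ ei) ∩ ej) =
        P.real ((A (s + 1) (t + 1) ∩ ej) \ ei) :=
      congrArg P.real (Set.ext fun ω => and_right_comm)
    have hnn : 0 ≤ P.real (A (s + 1) t ∩ ej ∩ ei) := measureReal_nonneg
    have hU := (measureReal_mono (μ := P) hcover).trans
      ((measureReal_union_le _ _).trans (add_le_add_left ((measureReal_union_le _ _).trans
        (add_le_add_left (measureReal_union_le _ _) _)) _))
    rw [hi'] at h01 h11
    rw [hj'] at h10 h11''
    have k01 := hIH s (t + 1)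
    have k10 := hIH (s + 1) t
    have k11 := hIH (s + 1) (t + 1)
    rw [Finset.card_insert_of_notMem hl, binLt_succ_succ, binLt_succ_succ]
    have ds := binLt_le_succ hp0 hp1 J.card s
    have dt := binLt_le_succ hp0 hp1 J.card t
    have e01 := mul_le_mul_of_nonneg_left k01 hp0
    have e10 := mul_le_mul_of_nonneg_left k10 hp0
    have e11 := mul_le_mul_of_nonneg_left k11
      (show 0 ≤ 1 - 2 * connProb M r by linarith)
    have hsq := mul_nonneg (mul_nonneg hp0 hp0)
      (mul_nonneg (sub_nonneg.2 ds) (sub_nonneg.2 dt))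
    push_cast
    calc _ ≤ _ := hU
      _ ≤ connProb M r * P.real (A s (t + 1)) + connProb M r * P.real (A (s + 1) t) +
          (1 - 2 * connProb M r) * P.real (A (s + 1) (t + 1)) + connFun M D := by linarith
      _ ≤ _ := by
        refine (add_le_add_left (add_le_add (add_le_add e01 e10) e11) _).trans ?_
        linarith

/-- A second moment bound for the probability that no event of a finite family occurs. -/
lemma measureReal_iInter_compl_le [IsProbabilityMeasure P] {ι : Type*} {I : Finset ι}
    {A : ι → Set Ω} (hA : ∀ i ∈ I, MeasurableSet (A i)) (hI : I.Nonempty) {a q : ℝ} (ha : 0 < a)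
    (hq : 0 ≤ q) (h1 : ∀ i ∈ I, P.real (A i) = a)
    (h2 : ∀ i ∈ I, ∀ j ∈ I, i ≠ j → P.real (A i ∩ A j) ≤ q) :
    P.real {ω | ∀ i ∈ I, ω ∉ A i} ≤ 1 / (I.card * a) + (q / a ^ 2 - 1) := by
  classical
  set m : ℝ := (I.card : ℝ) with hm
  have hm0 : 0 < m := by simpa [hm] using hI.card_pos
  set f : ι → Ω → ℝ := fun i => (A i).indicator 1 with hf
  set B : Set Ω := {ω | ∀ i ∈ I, ω ∉ A i} with hB
  have hBm : MeasurableSet B := by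
    have : B = ⋂ i ∈ I, (A i)ᶜ := by ext ω; simp [hB]
    rw [this]
    exact Finset.measurableSet_biInter _ fun i hi => (hA i hi).compl
  have hff : ∀ i ∈ I, Integrable (f i) P := fun i hi =>
    (integrable_const (1 : ℝ)).indicator (hA i hi)
  have hfe : ∀ i ∈ I, ∫ ω, f i ω ∂P = a := fun i hi => by
    rw [hf, integral_indicator_one (hA i hi), h1 i hi]
  have hprod : ∀ i j, (fun ω => f i ω * f j ω) = (A i ∩ A j).indicator 1 := fun i j => by
    rw [Set.inter_indicator_one]; rfl
  have hpi : ∀ i ∈ I, ∀ j ∈ I, Integrable (fun ω => f i ω * f j ω) P := fun i hi j hj => by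
    rw [hprod]
    exact (integrable_const (1 : ℝ)).indicator ((hA i hi).inter (hA j hj))
  have hpe : ∀ i ∈ I, ∀ j ∈ I, ∫ ω, f i ω * f j ω ∂P ≤ (if i = j then a else 0) + q := by
    intro i hi j hj
    rw [hprod, integral_indicator_one ((hA i hi).inter (hA j hj))]
    split_ifs with h
    · subst h
      rw [Set.inter_self, h1 i hi]
      linarith
    · linarith [h2 i hi j hj h]
  have hle : ∀ ω, B.indicator (fun _ => (m * a) ^ 2) ω ≤
      ∑ i ∈ I, ∑ j ∈ I, f i ω * f j ω - 2 * (m * a) * ∑ i ∈ I, f i ω + (m * a) ^ 2 := by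
    intro ω
    rw [← Finset.sum_mul_sum]
    by_cases hω : ω ∈ B
    · have : ∑ i ∈ I, f i ω = 0 := Finset.sum_eq_zero fun i hi => by
        simp [hf, Set.indicator_of_notMem (hω i hi)]
      rw [Set.indicator_of_mem hω, this]
      simp
    · rw [Set.indicator_of_notMem hω]
      nlinarith [sq_nonneg (∑ i ∈ I, f i ω - m * a)]
  have hs1 : Integrable (fun ω => ∑ i ∈ I, f i ω) P := integrable_finsetSum _ hff
  have hs2 : Integrable (fun ω => ∑ i ∈ I, ∑ j ∈ I, f i ω * f j ω) P :=
    integrable_finsetSum _ fun i hi => integrable_finsetSum _ fun j hj => hpi i hi j hj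
  have hs3 : Integrable (fun ω => ∑ i ∈ I, ∑ j ∈ I, f i ω * f j ω -
      2 * (m * a) * ∑ i ∈ I, f i ω) P := hs2.sub (hs1.const_mul _)
  have hintegral := integral_mono ((integrable_const ((m * a) ^ 2)).indicator hBm)
    (hs3.add (integrable_const ((m * a) ^ 2))) hle
  have hl : ∫ ω, B.indicator (fun _ => (m * a) ^ 2) ω ∂P = P.real B * (m * a) ^ 2 := by
    rw [integral_indicator_const _ hBm, smul_eq_mul]
  have hr : ∫ ω, (∑ i ∈ I, ∑ j ∈ I, f i ω * f j ω - 2 * (m * a) * ∑ i ∈ I, f i ω +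
      (m * a) ^ 2) ∂P ≤ (m * a + m ^ 2 * q) - 2 * (m * a) * (m * a) + (m * a) ^ 2 := by
    rw [integral_add hs3 (integrable_const _),
      integral_sub hs2 (hs1.const_mul _), integral_const_mul, integral_finsetSum _ hff,
      Finset.sum_congr rfl hfe,
      integral_finsetSum _ fun i hi => integrable_finsetSum _ fun j hj => hpi i hi j hj]
    have : ∑ i ∈ I, ∫ ω, ∑ j ∈ I, f i ω * f j ω ∂P ≤ m * a + m ^ 2 * q := by
      calc _ ≤ ∑ i ∈ I, (a + m * q) := by
            refine Finset.sum_le_sum fun i hi => ?_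
            rw [integral_finsetSum _ fun j hj => hpi i hi j hj]
            refine (Finset.sum_le_sum (hpe i hi)).trans_eq ?_
            rw [Finset.sum_add_distrib, Finset.sum_ite_eq, if_pos hi, Finset.sum_const,
              nsmul_eq_mul]
        _ = _ := by rw [Finset.sum_const, nsmul_eq_mul]; ring
    simp only [Finset.sum_const, nsmul_eq_mul, integral_const, probReal_univ, one_smul]
    gcongr
  have hfin : P.real B * (m * a) ^ 2 ≤ m * a + m ^ 2 * q - (m * a) ^ 2 := by
    rw [← hl]
    refine (hintegral.trans hr).trans_eq (by ring)
  have hma : 0 < (m * a) ^ 2 := by positivity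
  rw [← le_div_iff₀ hma] at hfin
  refine hfin.trans_eq ?_
  field_simp
  ring

lemma measureReal_forall_le_cnt_le [IsProbabilityMeasure P] (M : Model d P) {r D : ℝ}
    (hr : 0 < r) (hD : 0 < D) (hp : connProb M r ≤ 1 / 2) {m k s : ℕ} (hm : 1 ≤ m)
    (hmk : m ≤ k + 2) {a : ℝ} (ha : binLt (connProb M r) (k + 1) s = a) (ha0 : 0 < a) :
    P.real {ω | ∀ i ∈ Finset.Icc 1 m, ω ∉ cntLt M r i ((Finset.Icc 1 (k + 2)).erase i) s} ≤
      1 / (m * a) + (((a / (1 - connProb M r)) ^ 2 + k * connFun M D + a / (1 - connProb M r) *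
        ((2 * D * r) ^ d * volume.real (Metric.ball (0 : EuclideanSpace ℝ (Fin d)) 1))) /
          a ^ 2 - 1) := by
  have hp0 := connProb_nonneg M r
  have hp1 := connProb_le_one M r
  have hg0 := connFun_nonneg M D
  set p := connProb M r with hpdef
  have h1p : 0 < 1 - p := by linarith
  set v := (2 * D * r) ^ d * volume.real (Metric.ball (0 : EuclideanSpace ℝ (Fin d)) 1) with hv
  have hv0 : 0 ≤ v := by positivity
  have hmem : ∀ i ∈ Finset.Icc 1 m, 1 ≤ i ∧ i ∈ Finset.Icc 1 (k + 2) := fun i hi => by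
    simp only [Finset.mem_Icc] at hi ⊢; omega
  have hJ : ∀ i, ∀ j ∈ (Finset.Icc 1 (k + 2)).erase i, 1 ≤ j := fun i j hj => by
    simp only [Finset.mem_erase, Finset.mem_Icc] at hj; omega
  have hb0 : 0 ≤ binLt p k s := binLt_nonneg hp0 hp1 k s
  have hb : binLt p k s ≤ a / (1 - p) := by
    rw [le_div_iff₀ h1p, mul_comm, ← ha]
    exact mul_binLt_le_succ hp0 hp1 k s
  have hcard : (Finset.Icc 1 m).card = m := by simp
  have := measureReal_iInter_compl_le (P := P) (I := Finset.Icc 1 m)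
    (A := fun i => cntLt M r i ((Finset.Icc 1 (k + 2)).erase i) s) (a := a)
    (q := (a / (1 - p)) ^ 2 + k * connFun M D + a / (1 - p) * v)
    (fun i hi => measurableSet_cntLt M r (hmem i hi).1 (hJ i) (by simp) s)
    (by simpa using hm) ha0 (by positivity) ?_ ?_
  · rwa [hcard] at this
  · intro i hi
    have := measureReal_inter_cntLt M r (hmem i hi).1 (hJ i) (by simp) (E := Set.univ)
      (fun l _ => @MeasurableSet.univ _ (sigmaOf M (avoid l))) s
    rw [Set.univ_inter, probReal_univ, mul_one, Finset.card_erase_of_mem (hmem i hi).2] at this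
    simpa [← hpdef, ha] using this
  · intro i hi j hj hij
    set J := ((Finset.Icc 1 (k + 2)).erase i).erase j with hJdef
    have hJc : J.card = k := by
      rw [hJdef, Finset.card_erase_of_mem (Finset.mem_erase.2 ⟨hij.symm, (hmem j hj).2⟩),
        Finset.card_erase_of_mem (hmem i hi).2]
      simp
    have hJ1 : ∀ l ∈ J, 1 ≤ l := fun l hl => hJ i l (Finset.mem_of_mem_erase hl)
    have hiJ : i ∉ J := by simp [hJdef]
    have hjJ : j ∉ J := by simp [hJdef]
    have hsi : J ⊆ (Finset.Icc 1 (k + 2)).erase i := Finset.erase_subset _ _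
    have hsj : J ⊆ (Finset.Icc 1 (k + 2)).erase j := by
      rw [hJdef, Finset.erase_right_comm]; exact Finset.erase_subset _ _
    set far : Set Ω := {ω | 2 * D * r ≤ torusDist (M.X i ω) (M.X j ω)} with hfar
    have hfm : ∀ l ∈ J, MeasurableSet[sigmaOf M (avoid l)] far := by
      intro l hl
      have hil : i ≠ l := fun h => hiJ (h ▸ hl)
      have hjl : j ≠ l := fun h => hjJ (h ▸ hl)
      exact measurableSet_le (mδ := sigmaOf M (avoid l)) (@measurable_const _ _ _ (_) _)
        (measurable_torusDist_comp (mδ := sigmaOf M (avoid l))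
          (measurable_X_sigmaOf M (hmem i hi).1 (inl_mem_avoid _ hil))
          (measurable_X_sigmaOf M (hmem j hj).1 (inl_mem_avoid _ hjl)))
    have hfc : ∀ l ∈ J, MeasurableSet[sigmaOf M (avoid l)] farᶜ := fun l hl =>
      @MeasurableSet.compl _ _ (sigmaOf M (avoid l)) (hfm l hl)
    have hcov : cntLt M r i ((Finset.Icc 1 (k + 2)).erase i) s ∩
        cntLt M r j ((Finset.Icc 1 (k + 2)).erase j) s ⊆
        (far ∩ cntLt M r i J s ∩ cntLt M r j J s) ∪ (farᶜ ∩ cntLt M r i J s) := by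
      rintro ω ⟨h1, h2⟩
      have h1' : ω ∈ cntLt M r i J s := (cnt_mono hsi).trans_lt h1
      have h2' : ω ∈ cntLt M r j J s := (cnt_mono hsj).trans_lt h2
      by_cases hω : ω ∈ far
      · exact Or.inl ⟨⟨hω, h1'⟩, h2'⟩
      · exact Or.inr ⟨hω, h1'⟩
    have hF := measureReal_inter_cntLt_cntLt_le M hr hp (hmem i hi).1 (hmem j hj).1 hij hJ1 hiJ hjJ
      hfm subset_rfl s s
    have hC := measureReal_inter_cntLt M r (hmem i hi).1 hJ1 hiJ hfc s
    have hclose : P.real farᶜ ≤ v := by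
      have e : farᶜ = {ω | torusDist (M.X i ω) (M.X j ω) < 2 * D * r} := by
        ext ω; simp [hfar]
      rw [e]
      exact measureReal_torusDist_lt_le M (by positivity) (hmem i hi).1 (hmem j hj).1 hij
    rw [hJc] at hF hC
    rw [← hpdef] at hF hC
    calc _ ≤ _ := measureReal_mono hcov
      _ ≤ _ := measureReal_union_le _ _
      _ ≤ (binLt p k s * binLt p k s + k * connFun M D) + binLt p k s * P.real farᶜ :=
        add_le_add hF hC.le
      _ ≤ _ := by
        rw [sq]
        gcongr
/-! ### Almost sure concentration of the number of points -/

lemma ae_eventually_notMem_of_summable [IsFiniteMeasure P] {B : ℕ → Set Ω} {u : ℕ → ℝ}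
    (hu : Summable u) (h : ∀ᶠ k in atTop, P.real (B k) ≤ u k) :
    ∀ᵐ ω ∂P, ∀ᶠ k in atTop, ω ∉ B k := by
  obtain ⟨K, hK⟩ := eventually_atTop.1 h
  have hs : ∑' k, P (B (k + K)) ≠ ⊤ := by
    refine ne_top_of_le_ne_top ((summable_nat_add_iff K).2 hu).tsum_ofReal_ne_top
      (ENNReal.tsum_le_tsum fun k => ?_)
    rw [← ofReal_measureReal]
    exact ENNReal.ofReal_le_ofReal (hK _ (Nat.le_add_left _ _))
  filter_upwards [ae_eventually_notMem hs] with ω hω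
  obtain ⟨K', hK'⟩ := eventually_atTop.1 hω
  refine eventually_atTop.2 ⟨K' + K, fun k hk => ?_⟩
  obtain ⟨j, rfl⟩ : ∃ j, k = j + K := ⟨k - K, by omega⟩
  exact hK' j (by omega)

lemma lintegral_exp_mul_N (M : Model d P) (n : ℕ) (θ : ℝ) :
    ∫⁻ ω, ENNReal.ofReal (Real.exp (θ * M.N n ω)) ∂P =
      ENNReal.ofReal (Real.exp (n * (Real.exp θ - 1))) := by
  have hmap : ∀ k : ℕ, Measure.map (M.N n) P {k} =
      ENNReal.ofReal (Real.exp (-(n : ℝ)) * (n : ℝ) ^ k / k.factorial) := fun k => by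
    rw [Measure.map_apply (M.N_meas n) (measurableSet_singleton k)]
    exact M.N_poisson n k
  rw [← lintegral_map (f := fun k : ℕ => ENNReal.ofReal (Real.exp (θ * k))) .of_discrete
    (M.N_meas n), lintegral_countable']
  have hterm : ∀ k : ℕ, ENNReal.ofReal (Real.exp (θ * k)) * Measure.map (M.N n) P {k} =
      ENNReal.ofReal (Real.exp (-(n : ℝ)) * ((n * Real.exp θ) ^ k / k.factorial)) := fun k => by
    rw [hmap, ← ENNReal.ofReal_mul (Real.exp_nonneg _), mul_comm θ, Real.exp_nat_mul, mul_pow]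
    congr 1
    ring
  have hsum : HasSum (fun k : ℕ => Real.exp (-(n : ℝ)) * ((n * Real.exp θ) ^ k / k.factorial))
      (Real.exp (-(n : ℝ)) * Real.exp (n * Real.exp θ)) := by
    have h := NormedSpace.expSeries_div_hasSum_exp ((n : ℝ) * Real.exp θ)
    rw [← Real.exp_eq_exp_ℝ] at h
    exact h.mul_left _
  rw [tsum_congr hterm, ← ENNReal.ofReal_tsum_of_nonneg (fun k => by positivity) hsum.summable,
    hsum.tsum_eq, ← Real.exp_add]
  congr 2
  ring

lemma measureReal_N_le_exp [IsProbabilityMeasure P] (M : Model d P) (n : ℕ) (θ c : ℝ) :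
    P.real {ω | θ * c ≤ θ * M.N n ω} ≤ Real.exp (n * (Real.exp θ - 1) - θ * c) := by
  have hN : Measurable fun ω => ENNReal.ofReal (Real.exp (θ * M.N n ω)) :=
    ENNReal.measurable_ofReal.comp (Real.measurable_exp.comp
      ((measurable_from_nat.comp (M.N_meas n)).const_mul θ))
  have h := mul_meas_ge_le_lintegral hN (ENNReal.ofReal (Real.exp (θ * c))) (μ := P)
  rw [lintegral_exp_mul_N] at h
  have e : {ω | ENNReal.ofReal (Real.exp (θ * c)) ≤ ENNReal.ofReal (Real.exp (θ * M.N n ω))} =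
      {ω | θ * c ≤ θ * M.N n ω} := by
    ext ω
    simp only [Set.mem_ofPred_eq]
    rw [ENNReal.ofReal_le_ofReal_iff (Real.exp_nonneg _), Real.exp_le_exp]
  rw [e, ← ofReal_measureReal, ← ENNReal.ofReal_mul (Real.exp_nonneg _),
    ENNReal.ofReal_le_ofReal_iff (Real.exp_nonneg _)] at h
  rw [Real.exp_sub, le_div_iff₀ (Real.exp_pos _), mul_comm]
  exact h

lemma summable_exp_neg_mul_nat {a : ℝ} (ha : 0 < a) :
    Summable fun n : ℕ => Real.exp (-(n * a)) := by
  have : (fun n : ℕ => Real.exp (-(n * a))) = fun n : ℕ => Real.exp (-a) ^ n := by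
    ext n; rw [← Real.exp_nat_mul]; ring_nf
  rw [this]
  exact summable_geometric_of_lt_one (Real.exp_nonneg _) (Real.exp_lt_one_iff.2 (by linarith))

lemma ae_eventually_N_bounds [IsProbabilityMeasure P] (M : Model d P) {η : ℝ} (h0 : 0 < η)
    (h1 : η < 1) :
    ∀ᵐ ω ∂P, ∀ᶠ n : ℕ in atTop,
      (1 - η) * n ≤ M.N n ω ∧ (M.N n ω : ℝ) ≤ (1 + η) * n := by
  have hs := summable_exp_neg_mul_nat (a := η ^ 2 / 4) (by positivity)
  have key : ∀ θ, |θ| ≤ 1 → Real.exp θ - 1 ≤ θ + θ ^ 2 := fun θ hθ => by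
    linarith [(abs_le.1 (Real.abs_exp_sub_one_sub_id_le hθ)).2]
  have hup : ∀ᵐ ω ∂P, ∀ᶠ n : ℕ in atTop,
      ω ∉ {ω | η / 2 * ((1 + η) * n) ≤ η / 2 * M.N n ω} := by
    refine ae_eventually_notMem_of_summable hs (Eventually.of_forall fun n => ?_)
    refine (measureReal_N_le_exp M n _ _).trans (Real.exp_le_exp.2 ?_)
    have := mul_le_mul_of_nonneg_left (key (η / 2) (by rw [abs_of_pos] <;> linarith))
      (Nat.cast_nonneg (α := ℝ) n)
    nlinarith
  have hlo : ∀ᵐ ω ∂P, ∀ᶠ n : ℕ in atTop,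
      ω ∉ {ω | -(η / 2) * ((1 - η) * n) ≤ -(η / 2) * M.N n ω} := by
    refine ae_eventually_notMem_of_summable hs (Eventually.of_forall fun n => ?_)
    refine (measureReal_N_le_exp M n _ _).trans (Real.exp_le_exp.2 ?_)
    have := mul_le_mul_of_nonneg_left
      (key (-(η / 2)) (by rw [abs_neg, abs_of_pos] <;> linarith)) (Nat.cast_nonneg (α := ℝ) n)
    nlinarith
  filter_upwards [hup, hlo] with ω h h'
  filter_upwards [h, h'] with n h h'
  simp only [not_le] at h h'
  exact ⟨by nlinarith, by nlinarith⟩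

/-- Borel–Cantelli along a geometric sequence. -/
lemma ae_eventually_notMem_pow [IsFiniteMeasure P] {B : ℝ → Set Ω} {C ε ρ : ℝ} (hε : 0 < ε)
    (hρ : 1 < ρ) (h : ∀ᶠ x in atTop, P.real (B x) ≤ C * x ^ (-ε)) :
    ∀ᵐ ω ∂P, ∀ᶠ k : ℕ in atTop, ω ∉ B (ρ ^ k) := by
  have hρ0 : 0 < ρ := by linarith
  refine ae_eventually_notMem_of_summable (u := fun k => C * (ρ ^ (-ε)) ^ k)
    ((summable_geometric_of_lt_one (by positivity)
      (Real.rpow_lt_one_of_one_lt_of_neg hρ (by linarith))).mul_left C) ?_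
  filter_upwards [(tendsto_pow_atTop_atTop_of_one_lt hρ).eventually h] with k hk
  refine hk.trans_eq ?_
  rw [← Real.rpow_natCast, ← Real.rpow_natCast, ← Real.rpow_mul hρ0.le, ← Real.rpow_mul hρ0.le,
    mul_comm (k : ℝ)]
/-! ### Connection probabilities at small scales -/

lemma integrable_connFun_norm (M : Model d P) :
    Integrable fun x : EuclideanSpace ℝ (Fin d) => connFun M ‖x‖ := by
  simp_rw [connFun_of_nonneg M (norm_nonneg _)]
  exact M.g_integrable

lemma integral_connFun_norm (M : Model d P) :
    ∫ x : EuclideanSpace ℝ (Fin d), connFun M ‖x‖ = M.α := by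
  simp_rw [connFun_of_nonneg M (norm_nonneg _)]
  exact M.α_def.symm

lemma connFun_norm_div (M : Model d P) {r : ℝ} (hr : 0 < r) (y : EuclideanSpace ℝ (Fin d)) :
    connFun M (‖y‖ / r) = connFun M ‖r⁻¹ • y‖ := by
  rw [norm_smul, Real.norm_of_nonneg (inv_nonneg.2 hr.le), div_eq_inv_mul]

lemma integrable_connFun_norm_div (M : Model d P) {r : ℝ} (hr : 0 < r) :
    Integrable fun y : EuclideanSpace ℝ (Fin d) => connFun M (‖y‖ / r) := by
  simp_rw [connFun_norm_div M hr]
  exact (integrable_connFun_norm M).comp_smul (inv_ne_zero hr.ne')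

lemma connProb_le (M : Model d P) {r : ℝ} (hr : 0 < r) : connProb M r ≤ M.α * r ^ d := by
  calc connProb M r ≤ ∫ y : EuclideanSpace ℝ (Fin d), connFun M (‖y‖ / r) :=
        setIntegral_le_integral (integrable_connFun_norm_div M hr)
          (Eventually.of_forall fun _ => connFun_nonneg M _)
    _ = M.α * r ^ d := by
        simp_rw [connFun_norm_div M hr]
        rw [Measure.integral_comp_inv_smul_of_nonneg volume
          (fun y : EuclideanSpace ℝ (Fin d) => connFun M ‖y‖) hr.le, integral_connFun_norm,
          finrank_euclideanSpace_fin, smul_eq_mul, mul_comm]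

lemma ball_half_subset_cube : Metric.ball (0 : EuclideanSpace ℝ (Fin d)) (1 / 2) ⊆ cube d := by
  intro y hy i
  rw [mem_ball_zero_iff] at hy
  have h := (PiLp.norm_apply_le y i).trans_lt hy
  rw [Real.norm_eq_abs, abs_lt] at h
  exact ⟨h.1, h.2.le⟩

lemma eventually_le_connProb (M : Model d P) {κ : ℝ} (hκ : κ < 1) :
    ∀ᶠ r in nhdsWithin (0 : ℝ) (Set.Ioi 0), κ * (M.α * r ^ d) ≤ connProb M r := by
  have ht : Tendsto (fun r : ℝ => r⁻¹ * (1 / 2)) (nhdsWithin 0 (Set.Ioi 0)) atTop :=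
    tendsto_inv_nhdsGT_zero.atTop_mul_const (by norm_num)
  have hlim := (aecover_ball (μ := volume) (x := (0 : EuclideanSpace ℝ (Fin d)))
    ht).integral_tendsto_of_countably_generated (integrable_connFun_norm M)
  rw [integral_connFun_norm] at hlim
  have hα : κ * M.α < M.α := by nlinarith [M.α_pos]
  filter_upwards [hlim.eventually_const_lt hα, self_mem_nhdsWithin] with r hr (hr0 : 0 < r)
  have h1 : ∫ y in Metric.ball (0 : EuclideanSpace ℝ (Fin d)) (1 / 2), connFun M (‖y‖ / r) =
      r ^ d * ∫ y in Metric.ball (0 : EuclideanSpace ℝ (Fin d)) (r⁻¹ * (1 / 2)),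
        connFun M ‖y‖ := by
    simp_rw [connFun_norm_div M hr0]
    rw [Measure.setIntegral_comp_smul_of_pos volume
      (fun y : EuclideanSpace ℝ (Fin d) => connFun M ‖y‖) _ (inv_pos.2 hr0),
      finrank_euclideanSpace_fin, smul_eq_mul, inv_pow, inv_inv,
      smul_ball (inv_ne_zero hr0.ne'), smul_zero, Real.norm_of_nonneg (inv_nonneg.2 hr0.le)]
  have h2 : ∫ y in Metric.ball (0 : EuclideanSpace ℝ (Fin d)) (1 / 2), connFun M (‖y‖ / r) ≤
      connProb M r :=
    setIntegral_mono_set (integrable_connFun_norm_div M hr0).integrableOn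
      (Eventually.of_forall fun _ => connFun_nonneg M _)
      (LE.le.eventuallyLE ball_half_subset_cube)
  calc κ * (M.α * r ^ d) = r ^ d * (κ * M.α) := by ring
    _ ≤ r ^ d * ∫ y in Metric.ball (0 : EuclideanSpace ℝ (Fin d)) (r⁻¹ * (1 / 2)),
        connFun M ‖y‖ := by gcongr
    _ ≤ connProb M r := h1 ▸ h2

/-- The connectivity scale `r̂` as a function of a real intensity. -/
def scale (M : Model d P) (γ x : ℝ) : ℝ :=
  (γ * Real.log x / (M.α * x)) ^ ((1 : ℝ) / d)

lemma scale_natCast (M : Model d P) (γ : ℝ) (n : ℕ) : scale M γ n = rhat M γ n := rfl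

lemma scale_base_pos (M : Model d P) {γ x : ℝ} (hγ : 0 < γ) (hx : 1 < x) :
    0 < γ * Real.log x / (M.α * x) := by
  have := M.α_pos
  have := Real.log_pos hx
  positivity

lemma scale_pos (M : Model d P) {γ x : ℝ} (hγ : 0 < γ) (hx : 1 < x) : 0 < scale M γ x :=
  Real.rpow_pos_of_pos (scale_base_pos M hγ hx) _

lemma α_mul_scale_pow (M : Model d P) (hd : d ≠ 0) {γ x : ℝ} (hγ : 0 < γ) (hx : 1 < x) :
    M.α * scale M γ x ^ d = γ * Real.log x / x := by
  rw [scale, one_div, Real.rpow_inv_natCast_pow (scale_base_pos M hγ hx).le hd]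
  have := M.α_pos
  field_simp

lemma scale_le_scale (M : Model d P) {γ x y : ℝ} (hγ : 0 < γ) (hx : Real.exp 1 ≤ x)
    (hxy : x ≤ y) : scale M γ y ≤ scale M γ x := by
  have hα := M.α_pos
  have h1 : 1 < x := (Real.one_lt_exp_iff.2 one_pos).trans_le hx
  refine Real.rpow_le_rpow (scale_base_pos M hγ (h1.trans_le hxy)).le ?_ (by positivity)
  have h := Real.log_div_self_antitoneOn (Set.mem_Ici.2 hx) (Set.mem_Ici.2 (hx.trans hxy)) hxy
  simp only at h
  calc γ * Real.log y / (M.α * y) = γ / M.α * (Real.log y / y) := by ring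
    _ ≤ γ / M.α * (Real.log x / x) := by gcongr
    _ = _ := by ring

lemma tendsto_scale (M : Model d P) (hd : d ≠ 0) {γ : ℝ} (hγ : 0 < γ) :
    Tendsto (scale M γ) atTop (nhdsWithin 0 (Set.Ioi 0)) := by
  refine tendsto_nhdsWithin_iff.2 ⟨?_, ?_⟩
  · have h1 : Tendsto (fun x : ℝ => γ * Real.log x / (M.α * x)) atTop (nhds 0) := by
      have := (Real.isLittleO_log_id_atTop.tendsto_div_nhds_zero).const_mul (γ / M.α)
      rw [mul_zero] at this
      refine this.congr fun x => ?_
      simp only [id]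
      ring
    have h2 := h1.rpow_const (p := (1 : ℝ) / d) (Or.inr (by positivity))
    rwa [Real.zero_rpow (by positivity)] at h2
  · filter_upwards [eventually_gt_atTop 1] with x hx using scale_pos M hγ hx
/-! ### Degrees and neighbour counts -/

lemma connFun_div_le_connFun_div (M : Model d P) {t r r' : ℝ} (ht : 0 ≤ t) (hr : 0 < r)
    (hrr' : r ≤ r') : connFun M (t / r) ≤ connFun M (t / r') :=
  connFun_antitone M (div_le_div_of_nonneg_left ht hr hrr')

lemma finite_adj (M : Model d P) (n : ℕ) (r : ℝ) (ω : Ω) (i : ℕ) :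
    {j | adj M n r ω i j}.Finite :=
  (Set.finite_Icc 1 (M.N n ω)).subset fun _ hj => ⟨hj.2.2.1, hj.2.2.2.2.1⟩

lemma cnt_le_deg (M : Model d P) {n : ℕ} {r r' : ℝ} (hr : 0 < r) (hrr' : r ≤ r') {ω : Ω} {i : ℕ}
    (hi : 1 ≤ i) (hiN : i ≤ M.N n ω) {J : Finset ℕ} (hJ : ∀ j ∈ J, 1 ≤ j ∧ j ≤ M.N n ω)
    (hiJ : i ∉ J) : cnt M r i J ω ≤ deg M n r' ω i := by
  classical
  rw [cnt, deg, ← Set.ncard_coe_finset]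
  refine Set.ncard_le_ncard (fun j hj => ?_) (finite_adj M n r' ω i)
  rw [Finset.mem_coe, Finset.mem_filter] at hj
  have ht := torusDist_nonneg (M.X i ω) (M.X j ω)
  refine ⟨fun h => hiJ (h ▸ hj.1), hi, (hJ j hj.1).1, hiN, (hJ j hj.1).2, ?_⟩
  rw [← connFun_of_nonneg M (div_nonneg ht (hr.trans_le hrr').le)]
  exact le_trans hj.2 (connFun_div_le_connFun_div M ht hr hrr')

lemma deg_le_cnt (M : Model d P) {n : ℕ} {r r' : ℝ} (hr : 0 < r) (hrr' : r ≤ r') {ω : Ω} {i : ℕ}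
    {K : Finset ℕ} (hK : Finset.Icc 1 (M.N n ω) ⊆ K) :
    deg M n r ω i ≤ cnt M r' i (K.erase i) ω := by
  classical
  rw [cnt, deg, ← Set.ncard_coe_finset]
  refine Set.ncard_le_ncard (fun j hj => ?_) (Finset.finite_toSet _)
  obtain ⟨hij, -, hj1, -, hjN, hU⟩ := hj
  have ht := torusDist_nonneg (M.X i ω) (M.X j ω)
  rw [Finset.mem_coe, Finset.mem_filter, Finset.mem_erase]
  refine ⟨⟨hij.symm, hK (Finset.mem_Icc.2 ⟨hj1, hjN⟩)⟩, ?_⟩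
  rw [← connFun_of_nonneg M (div_nonneg ht hr.le)] at hU
  exact le_trans hU (connFun_div_le_connFun_div M ht hr hrr')

lemma le_minDeg (M : Model d P) {n : ℕ} {r : ℝ} {ω : Ω} {s : ℕ} (hN : 1 ≤ M.N n ω)
    (h : ∀ i, 1 ≤ i → i ≤ M.N n ω → s ≤ deg M n r ω i) : s ≤ minDeg M n r ω := by
  obtain ⟨i, h1, h2, h3⟩ := Nat.sInf_mem (s := {k : ℕ | ∃ i, 1 ≤ i ∧ i ≤ M.N n ω ∧
    deg M n r ω i = k}) ⟨_, 1, le_rfl, hN, rfl⟩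
  rw [minDeg, ← h3]
  exact h i h1 h2

lemma minDeg_le_deg (M : Model d P) {n : ℕ} {r : ℝ} {ω : Ω} {i : ℕ} (hi : 1 ≤ i)
    (hiN : i ≤ M.N n ω) : minDeg M n r ω ≤ deg M n r ω i :=
  Nat.sInf_le ⟨i, hi, hiN, rfl⟩

/-! ### Geometric subsequences -/

lemma eventually_exists_pow_ge {ρ : ℝ} (hρ : 1 < ρ) {Q : ℝ → Prop}
    (h : ∀ᶠ k : ℕ in atTop, Q (ρ ^ k)) :
    ∀ᶠ n : ℕ in atTop, ∃ x, Q x ∧ (n : ℝ) ≤ x ∧ x ≤ ρ * n := by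
  obtain ⟨K, hK⟩ := eventually_atTop.1 h
  filter_upwards [eventually_ge_atTop 1, tendsto_natCast_atTop_atTop.eventually_ge_atTop (ρ ^ K)]
    with n hn hn'
  obtain ⟨k, hk, hk'⟩ := exists_nat_pow_near (show (1 : ℝ) ≤ n by exact_mod_cast hn) hρ
  refine ⟨ρ ^ (k + 1), hK _ ?_, hk'.le, ?_⟩
  · exact ((pow_lt_pow_iff_right₀ hρ).1 (hn'.trans_lt hk')).le
  · rw [pow_succ']
    exact mul_le_mul_of_nonneg_left hk (by linarith)

lemma eventually_exists_pow_le {ρ : ℝ} (hρ : 1 < ρ) {Q : ℝ → Prop}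
    (h : ∀ᶠ k : ℕ in atTop, Q (ρ ^ k)) :
    ∀ᶠ n : ℕ in atTop, ∃ x, Q x ∧ x ≤ n ∧ n ≤ ρ * x := by
  obtain ⟨K, hK⟩ := eventually_atTop.1 h
  filter_upwards [eventually_ge_atTop 1, tendsto_natCast_atTop_atTop.eventually_ge_atTop (ρ ^ K)]
    with n hn hn'
  obtain ⟨k, hk, hk'⟩ := exists_nat_pow_near (show (1 : ℝ) ≤ n by exact_mod_cast hn) hρ
  refine ⟨ρ ^ k, hK _ ?_, hk, ?_⟩
  · exact Nat.lt_succ_iff.1 ((pow_lt_pow_iff_right₀ hρ).1 (hn'.trans_lt hk'))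
  · rw [← pow_succ']
    exact hk'.le

/-! ### The lower bound -/

lemma measureReal_exists_cntLt_le [IsProbabilityMeasure P] (M : Model d P) (r : ℝ) {θ : ℝ}
    (hθ : 0 ≤ θ) (m k s : ℕ) :
    P.real {ω | ∃ i ∈ Finset.Icc 1 m, ω ∈ cntLt M r i ((Finset.Icc 1 k).erase i) s} ≤
      m * Real.exp (θ * (s - 1) - (k - 1) * connProb M r * (1 - Real.exp (-θ))) := by
  have hp0 := connProb_nonneg M r
  have hp1 := connProb_le_one M r
  have e : {ω | ∃ i ∈ Finset.Icc 1 m, ω ∈ cntLt M r i ((Finset.Icc 1 k).erase i) s} =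
      ⋃ i ∈ Finset.Icc 1 m, cntLt M r i ((Finset.Icc 1 k).erase i) s := by
    ext ω; simp
  rw [e]
  refine (measureReal_biUnion_finset_le _ _).trans ?_
  calc _ ≤ ∑ i ∈ Finset.Icc 1 m,
        Real.exp (θ * (s - 1) - (k - 1) * connProb M r * (1 - Real.exp (-θ))) := by
        refine Finset.sum_le_sum fun i hi => ?_
        have h := measureReal_inter_cntLt M r (Finset.mem_Icc.1 hi).1
          (J := (Finset.Icc 1 k).erase i)
          (fun j hj => (Finset.mem_Icc.1 (Finset.mem_of_mem_erase hj)).1) (by simp) (E := Set.univ)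
          (fun l _ => @MeasurableSet.univ _ (sigmaOf M (avoid l))) s
        rw [Set.univ_inter, probReal_univ, mul_one] at h
        rw [h]
        refine (binLt_le_exp hp0 hp1 θ _ s hθ).trans (Real.exp_le_exp.2 ?_)
        have hcard : (k : ℝ) - 1 ≤ ((Finset.Icc 1 k).erase i).card := by
          have := Finset.pred_card_le_card_erase (s := Finset.Icc 1 k) (a := i)
          rw [Nat.card_Icc] at this
          have h2 : k ≤ ((Finset.Icc 1 k).erase i).card + 1 := by omega
          have h3 : (k : ℝ) ≤ ((Finset.Icc 1 k).erase i).card + 1 := by exact_mod_cast h2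
          linarith
        have hexp : 0 ≤ 1 - Real.exp (-θ) := by
          have := Real.exp_le_one_iff.2 (show -θ ≤ 0 by linarith)
          linarith
        gcongr
    _ = _ := by simp

lemma eventually_measureReal_lower [IsProbabilityMeasure P] (M : Model d P) (hd : d ≠ 0)
    {γ b η : ℝ} (hγ : 0 < γ) (hb0 : 0 < b) (hb1 : b < 1) (hη0 : 0 < η) (hη1 : η < 1) :
    ∀ᶠ x : ℝ in atTop,
      P.real {ω | ∃ i ∈ Finset.Icc 1 ⌊2 * x⌋₊, ω ∈ cntLt M (scale M γ x) i
        ((Finset.Icc 1 ⌊(1 - η) ^ 2 * x⌋₊).erase i) ⌈γ * b * Real.log x⌉₊} ≤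
      2 * x ^ (-(γ * ((1 - η) ^ 4 * (1 - b) + b * Real.log b) - 1)) := by
  have hη : 0 < 1 - η := by linarith
  have hp := (tendsto_scale M hd hγ).eventually
    (eventually_le_connProb M (show 1 - η < 1 by linarith))
  filter_upwards [hp, eventually_gt_atTop 1,
    eventually_ge_atTop (2 / ((1 - η) ^ 2 * η))] with x hp hx1 hx2
  have hx0 : 0 < x := by linarith
  have hL := Real.log_pos hx1
  have hlb : Real.log b < 0 := Real.log_neg hb0 hb1
  rw [α_mul_scale_pow M hd hγ hx1] at hp
  set p := connProb M (scale M γ x)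
  set L := Real.log x with hLdef
  refine (measureReal_exists_cntLt_le M _ (θ := -Real.log b) (by linarith) _ _ _).trans ?_
  rw [neg_neg, Real.exp_log hb0]
  have hm : (⌊2 * x⌋₊ : ℝ) ≤ 2 * x := Nat.floor_le (by positivity)
  have hs : (⌈γ * b * L⌉₊ : ℝ) - 1 ≤ γ * b * L := by
    linarith [Nat.ceil_lt_add_one (show 0 ≤ γ * b * L by positivity)]
  have hk : (1 - η) ^ 3 * x ≤ (⌊(1 - η) ^ 2 * x⌋₊ : ℝ) - 1 := by
    have h1 := Nat.lt_floor_add_one ((1 - η) ^ 2 * x)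
    have h2 : 2 ≤ x * ((1 - η) ^ 2 * η) := (div_le_iff₀ (by positivity)).1 hx2
    nlinarith
  have hkp : (1 - η) ^ 4 * γ * L ≤ ((⌊(1 - η) ^ 2 * x⌋₊ : ℝ) - 1) * p := by
    calc (1 - η) ^ 4 * γ * L = ((1 - η) ^ 3 * x) * ((1 - η) * (γ * L / x)) := by
          field_simp
      _ ≤ _ := by
          refine mul_le_mul hk hp (by positivity) (le_trans (by positivity) hk)
  calc _ ≤ 2 * x * Real.exp (-(γ * ((1 - η) ^ 4 * (1 - b) + b * Real.log b)) * L) := by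
        gcongr
        have h1 := mul_le_mul_of_nonneg_left hs (show 0 ≤ -Real.log b by linarith)
        have h2 := mul_le_mul_of_nonneg_right hkp (show 0 ≤ 1 - b by linarith)
        nlinarith
    _ = 2 * x * x ^ (-(γ * ((1 - η) ^ 4 * (1 - b) + b * Real.log b))) := by
        rw [Real.rpow_def_of_pos hx0, mul_comm _ L]
    _ = _ := by
        rw [neg_sub, Real.rpow_sub hx0, Real.rpow_one, Real.rpow_neg hx0.le]
        ring

lemma exists_lower_slack {γ b : ℝ} (hγ : 0 < γ) (h : 1 / γ < H b) :
    ∃ η, 0 < η ∧ η < 1 ∧ 1 < γ * ((1 - η) ^ 4 * (1 - b) + b * Real.log b) := by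
  have hc : ContinuousAt (fun η : ℝ => γ * ((1 - η) ^ 4 * (1 - b) + b * Real.log b)) 0 := by
    fun_prop
  have h1 : 1 < γ * ((1 - (0 : ℝ)) ^ 4 * (1 - b) + b * Real.log b) := by
    rw [div_lt_iff₀' hγ, H] at h
    simpa using h
  have h2 : ∀ᶠ η in nhdsWithin (0 : ℝ) (Set.Ioi 0),
      1 < γ * ((1 - η) ^ 4 * (1 - b) + b * Real.log b) :=
    (hc.eventually_const_lt h1).filter_mono nhdsWithin_le_nhds
  obtain ⟨η, h3, h4⟩ := (h2.and (Ioo_mem_nhdsGT one_pos)).exists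
  exact ⟨η, h4.1, h4.2, h3⟩

lemma ae_eventually_le_minDeg [IsProbabilityMeasure P] (M : Model d P) (hd : d ≠ 0)
    {γ b : ℝ} (hγ : 0 < γ) (hb0 : 0 < b) (hb1 : b < 1) (h : 1 / γ < H b) :
    ∀ᵐ ω ∂P, ∀ᶠ n : ℕ in atTop, γ * b * Real.log n ≤ minDeg M n (rhat M γ n) ω := by
  obtain ⟨η, hη0, hη1, hψ⟩ := exists_lower_slack hγ h
  have hη : 0 < 1 - η := by linarith
  have hρ : 1 < (1 - η)⁻¹ := (one_lt_inv₀ hη).2 (by linarith)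
  filter_upwards [ae_eventually_N_bounds M hη0 hη1, ae_eventually_notMem_pow (sub_pos.2 hψ) hρ
    (eventually_measureReal_lower M hd hγ hb0 hb1 hη0 hη1)] with ω hN hB
  filter_upwards [hN, eventually_exists_pow_ge hρ (Q := fun x => ¬ ∃ i ∈ Finset.Icc 1 ⌊2 * x⌋₊,
      ω ∈ cntLt M (scale M γ x) i ((Finset.Icc 1 ⌊(1 - η) ^ 2 * x⌋₊).erase i)
        ⌈γ * b * Real.log x⌉₊) hB, eventually_gt_atTop 0,
    tendsto_natCast_atTop_atTop.eventually_ge_atTop (Real.exp 1)]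
    with n ⟨hN1, hN2⟩ ⟨x, hx, hnx, hxn⟩ hn0 hne
  have hn : (0 : ℝ) < n := by exact_mod_cast hn0
  have hxn' : (1 - η) * x ≤ n := by
    rw [← div_eq_inv_mul, le_div_iff₀' hη] at hxn
    exact hxn
  have hx1 : 1 < x := (Real.one_lt_exp_iff.2 one_pos).trans_le (hne.trans hnx)
  have hNpos : (0 : ℝ) < M.N n ω := (mul_pos hη hn).trans_le hN1
  have hs : ⌈γ * b * Real.log x⌉₊ ≤ minDeg M n (rhat M γ n) ω := by
    refine le_minDeg M (Nat.one_le_iff_ne_zero.2 fun h0 => by simp [h0] at hNpos)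
      fun i hi hiN => ?_
    have hi2 : i ∈ Finset.Icc 1 ⌊2 * x⌋₊ := by
      refine Finset.mem_Icc.2 ⟨hi, Nat.le_floor ?_⟩
      have : (i : ℝ) ≤ M.N n ω := by exact_mod_cast hiN
      nlinarith
    have hcnt : ⌈γ * b * Real.log x⌉₊ ≤ cnt M (scale M γ x) i
        ((Finset.Icc 1 ⌊(1 - η) ^ 2 * x⌋₊).erase i) ω :=
      not_lt.1 fun hlt => hx ⟨i, hi2, hlt⟩
    refine hcnt.trans (cnt_le_deg M (scale_pos M hγ hx1) ?_ hi hiN (fun j hj => ?_) (by simp))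
    · rw [← scale_natCast]
      exact scale_le_scale M hγ hne hnx
    · obtain ⟨hj1, hj2⟩ := Finset.mem_Icc.1 (Finset.mem_of_mem_erase hj)
      refine ⟨hj1, hj2.trans (Nat.floor_le_of_le ?_)⟩
      nlinarith
  calc γ * b * Real.log n ≤ γ * b * Real.log x := by gcongr
    _ ≤ ⌈γ * b * Real.log x⌉₊ := Nat.le_ceil _
    _ ≤ _ := by exact_mod_cast hs

/-! ### The upper bound -/

lemma tendsto_const_mul_log_div (γ : ℝ) :
    Tendsto (fun x : ℝ => γ * Real.log x / x) atTop (nhds 0) := by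
  have := (Real.isLittleO_log_id_atTop.tendsto_div_nhds_zero).const_mul γ
  rw [mul_zero] at this
  refine this.congr fun x => ?_
  simp only [id]
  ring

lemma eventually_add_log_mul_log_le {a : ℝ} (ha : 0 < a) (C : ℝ) {ε : ℝ} (hε : 0 < ε) :
    ∀ᶠ x : ℝ in atTop, C + Real.log (a * Real.log x) ≤ ε * Real.log x := by
  have h1 := (Real.tendsto_log_atTop.const_mul_atTop ha).eventually
    (Real.isLittleO_log_id_atTop.bound (show 0 < ε / (2 * a) by positivity))
  filter_upwards [h1, Real.tendsto_log_atTop.eventually_ge_atTop (2 * C / ε),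
    Real.tendsto_log_atTop.eventually_ge_atTop 0] with x h1 h2 h3
  rw [id, Real.norm_of_nonneg (mul_nonneg ha.le h3)] at h1
  have h4 : ε / (2 * a) * (a * Real.log x) = ε / 2 * Real.log x := by field_simp
  have h5 := (div_le_iff₀ hε).1 h2
  linarith [Real.le_norm_self (Real.log (a * Real.log x))]

lemma eventually_le_binLt (M : Model d P) (hd : d ≠ 0) {γ b η ε : ℝ} (hγ : 0 < γ) (hb0 : 0 < b)
    (hb1 : b < 1) (hη0 : 0 < η) (hη1 : η < 1) (hbη : b ≤ (1 - η) ^ 2) (hε : 0 < ε) :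
    ∀ᶠ x : ℝ in atTop,
      x ^ (-(γ * ((1 + η) ^ 4 - b * (1 + Real.log ((1 - η) ^ 2 / b))) + ε)) ≤
        binLt (connProb M (scale M γ x)) (⌊(1 + η) ^ 2 * x⌋₊ + 1) ⌈γ * b * Real.log x⌉₊ := by
  have hη : 0 < 1 - η := by linarith
  have hγb : 0 < γ * b := by positivity
  set ℓ := Real.log ((1 - η) ^ 2 / b) with hℓdef
  have hℓ : 0 ≤ ℓ := Real.log_nonneg ((one_le_div hb0).2 hbη)
  filter_upwards [(tendsto_scale M hd hγ).eventually
      (eventually_le_connProb M (show 1 - η < 1 by linarith)),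
    eventually_gt_atTop 1, eventually_ge_atTop (1 / η),
    (tendsto_const_mul_log_div γ).eventually_le_const (show 0 < η / (1 + η) by positivity),
    (Real.tendsto_log_atTop.const_mul_atTop hγb).eventually_ge_atTop 2,
    eventually_add_log_mul_log_le hγb (2 + ℓ) hε] with x hp hx1 hxη hq hs hlog
  have hx0 : 0 < x := by linarith
  have hL := Real.log_pos hx1
  have hple := connProb_le M (scale_pos M hγ hx1)
  rw [α_mul_scale_pow M hd hγ hx1] at hp hple
  set p := connProb M (scale M γ x)
  set L := Real.log x with hLdef
  have hp0 : 0 < p := lt_of_lt_of_le (by positivity) hp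
  have hp1 : (1 + η)⁻¹ ≤ 1 - p := by
    have : (1 + η)⁻¹ = 1 - η / (1 + η) := by field_simp; ring
    linarith
  have hp1' : 0 < 1 - p := lt_of_lt_of_le (by positivity) hp1
  obtain ⟨k, hk⟩ : ∃ k, ⌈γ * b * L⌉₊ = k + 1 :=
    Nat.exists_eq_succ_of_ne_zero (Nat.ceil_pos.2 (by linarith)).ne'
  have hk1 : γ * b * L ≤ k + 1 := by
    have := Nat.le_ceil (γ * b * L)
    rw [hk] at this
    exact_mod_cast this
  have hk2 : (k : ℝ) ≤ γ * b * L := by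
    have := Nat.ceil_lt_add_one (show 0 ≤ γ * b * L by linarith)
    rw [hk] at this
    push_cast at this
    linarith
  have hk3 : (1 : ℝ) ≤ k := by linarith
  have hLx : γ * b * L ≤ η * x := by
    have h1 : γ * L ≤ η / (1 + η) * x := (div_le_iff₀ hx0).1 hq
    have h2 : η / (1 + η) ≤ η := div_le_self hη0.le (by linarith)
    calc γ * b * L = b * (γ * L) := by ring
      _ ≤ 1 * (γ * L) := by gcongr
      _ ≤ η * x := by nlinarith
  set m := ⌊(1 + η) ^ 2 * x⌋₊ + 1 with hmdef
  have hm1 : (1 + η) ^ 2 * x ≤ m := by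
    rw [hmdef]; push_cast; exact (Nat.lt_floor_add_one _).le
  have hm2 : (m : ℝ) ≤ (1 + η) ^ 3 * x := by
    have h1 := Nat.floor_le (show 0 ≤ (1 + η) ^ 2 * x by positivity)
    have h2 : 1 ≤ x * η := (div_le_iff₀ hη0).1 hxη
    rw [hmdef]; push_cast
    nlinarith [mul_pos hη0 hx0, sq_nonneg η]
  have hmk : (1 - η) * x ≤ m - k := by nlinarith [mul_pos hη0 hx0]
  have hkm : k < m := by
    have : (k : ℝ) < m := by nlinarith
    exact_mod_cast this
  rw [hk]
  refine le_trans ?_ (exp_le_binLt hp0 (by linarith) (by exact_mod_cast hk3) hkm)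
  rw [Real.rpow_def_of_pos hx0, ← hLdef]
  refine Real.exp_le_exp.2 ?_
  have hlogle : ℓ ≤ Real.log ((m - k) * p / k) := by
    refine Real.log_le_log (by positivity) ?_
    rw [div_le_div_iff₀ hb0 (by linarith)]
    have h1 : (1 - η) * x * ((1 - η) * (γ * L / x)) ≤ (m - k) * p :=
      mul_le_mul hmk hp (by positivity) (le_trans (by positivity) hmk)
    have h2 : (1 - η) * x * ((1 - η) * (γ * L / x)) = (1 - η) ^ 2 * (γ * L) := by field_simp
    calc (1 - η) ^ 2 * k ≤ (1 - η) ^ 2 * (γ * b * L) := by gcongr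
      _ = (1 - η) ^ 2 * (γ * L) * b := by ring
      _ ≤ _ := by rw [← h2]; gcongr
  have hmp : m * p / (1 - p) ≤ (1 + η) ^ 4 * γ * L := by
    rw [div_le_iff₀ hp1']
    calc m * p ≤ (1 + η) ^ 3 * x * (γ * L / x) := by gcongr
      _ = (1 + η) ^ 4 * γ * L * (1 + η)⁻¹ := by field_simp
      _ ≤ _ := by gcongr
  have hlogk : Real.log k ≤ Real.log (γ * b * L) := Real.log_le_log (by linarith) hk2
  have hmain : (γ * b * L - 1) * (1 + ℓ) ≤ k * (1 + Real.log ((m - k) * p / k)) :=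
    mul_le_mul (by linarith) (by linarith) (by linarith) (by linarith)
  nlinarith

lemma eventually_connFun_mul_log_le (M : Model d P) {c : ℝ} (hc : 0 < c)
    (hg : M.g =o[atTop] fun r : ℝ => Real.exp (-(c * r))) :
    ∀ᶠ x : ℝ in atTop, connFun M (4 / c * Real.log x) ≤ (x ^ 4)⁻¹ := by
  filter_upwards [(Real.tendsto_log_atTop.const_mul_atTop (show 0 < 4 / c by positivity)).eventually
    (hg.bound one_pos), eventually_gt_atTop 1] with x h hx
  have hL := Real.log_pos hx
  rw [connFun_of_nonneg M (by positivity)]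
  refine (Real.le_norm_self _).trans (h.trans_eq ?_)
  rw [one_mul, Real.norm_of_nonneg (Real.exp_nonneg _),
    show -(c * (4 / c * Real.log x)) = -((4 : ℕ) * Real.log x) by field_simp; norm_num,
    Real.exp_neg, Real.exp_nat_mul, Real.exp_log (by linarith)]

lemma second_moment_error_le {d : ℕ} {x y L c γ η α V p a w m k R : ℝ} (hx1 : 1 < x) (hy0 : 0 < y)
    (hy1 : y ≤ 1) (hxy : 1 / x ≤ y) (hL1 : 1 ≤ L) (hc : 0 < c) (hγ : 0 < γ) (hη : 0 < 1 - η)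
    (hα : 0 < α) (hV : 0 ≤ V) (hp0 : 0 ≤ p) (hp1 : 1 / 2 ≤ 1 - p) (hple : p ≤ γ * L / x)
    (ha0 : 0 < a) (hainv : 1 / a ≤ x * y) (hw0 : 0 ≤ w) (hw : w ≤ (x ^ 4)⁻¹)
    (hm : (1 - η) * x / 2 ≤ m) (hk : k ≤ 4 * x)
    (hrd : α * R ^ d = γ * L / x) :
    1 / (m * a) + (((a / (1 - p)) ^ 2 + k * w + a / (1 - p) *
      ((2 * (4 / c * L) * R) ^ d * V)) / a ^ 2 - 1) ≤
      (2 / (1 - η) + 8 * γ + 4 + 2 * ((8 / c) ^ d * (γ / α) * V)) * (L ^ (d + 1) * y) := by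
  have hx0 : 0 < x := by linarith
  have hm0 : 0 < m := lt_of_lt_of_le (by positivity) hm
  have hLd : 1 ≤ L ^ d := one_le_pow₀ hL1
  have hLd1 : L ≤ L ^ (d + 1) := by rw [pow_succ]; nlinarith
  have hid : 1 / (m * a) + (((a / (1 - p)) ^ 2 + k * w + a / (1 - p) *
      ((2 * (4 / c * L) * R) ^ d * V)) / a ^ 2 - 1) =
      1 / m * (1 / a) + (1 / (1 - p) ^ 2 - 1) + k * w * (1 / a) ^ 2 +
        1 / (1 - p) * ((2 * (4 / c * L) * R) ^ d * V) * (1 / a) := by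
    have : 1 - p ≠ 0 := by linarith
    field_simp
    ring
  rw [hid]
  have b1 : 1 / m * (1 / a) ≤ 2 / (1 - η) * (L ^ (d + 1) * y) := by
    calc 1 / m * (1 / a) ≤ 1 / ((1 - η) * x / 2) * (x * y) := by gcongr
      _ = 2 / (1 - η) * (1 * y) := by field_simp
      _ ≤ _ := by gcongr; linarith
  have b2 : 1 / (1 - p) ^ 2 - 1 ≤ 8 * γ * (L ^ (d + 1) * y) := by
    have h1 : 1 / (1 - p) ^ 2 - 1 ≤ 8 * p := by
      rw [sub_le_iff_le_add, div_le_iff₀ (by positivity)]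
      nlinarith [mul_nonneg hp0 (sub_nonneg.2 (show p ≤ 1 / 2 by linarith)),
        mul_nonneg hp0 (mul_nonneg hp0 hp0)]
    calc _ ≤ 8 * (γ * L / x) := by linarith
      _ = 8 * γ * (L * (1 / x)) := by ring
      _ ≤ _ := by gcongr
  have b3 : k * w * (1 / a) ^ 2 ≤ 4 * (L ^ (d + 1) * y) := by
    calc k * w * (1 / a) ^ 2 ≤ 4 * x * (x ^ 4)⁻¹ * (x * y) ^ 2 := by gcongr
      _ = 4 * (1 / x * y * y) := by field_simp
      _ ≤ 4 * (1 * 1 * y) := by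
          gcongr
          rw [div_le_one hx0]; exact hx1.le
      _ ≤ _ := by gcongr; linarith
  have b4 : 1 / (1 - p) * ((2 * (4 / c * L) * R) ^ d * V) * (1 / a) ≤
      2 * ((8 / c) ^ d * (γ / α) * V) * (L ^ (d + 1) * y) := by
    have h1 : 1 / (1 - p) ≤ 2 := by
      rw [div_le_iff₀ (by linarith)]; linarith
    have h2 : R ^ d = γ / α * L * (1 / x) := by
      rw [← mul_right_inj' hα.ne', hrd]; field_simp
    have h3 : (2 * (4 / c * L) * R) ^ d = (8 / c) ^ d * (γ / α) * L ^ (d + 1) * (1 / x) := by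
      rw [mul_pow, h2, show 2 * (4 / c * L) = 8 / c * L by ring, mul_pow, pow_succ]; ring
    rw [h3]
    calc _ ≤ 2 * ((8 / c) ^ d * (γ / α) * L ^ (d + 1) * (1 / x) * V) * (x * y) := by gcongr
      _ = _ := by field_simp
  linarith

lemma eventually_measureReal_upper [IsProbabilityMeasure P] (M : Model d P) (hd : d ≠ 0)
    {c : ℝ} (hc : 0 < c) (hg : M.g =o[atTop] fun r : ℝ => Real.exp (-(c * r)))
    {γ η ε : ℝ} (hγ : 0 < γ) (hη0 : 0 < η) (hη1 : η < 1) (hε0 : 0 < ε) (hε1 : ε ≤ 1)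
    {s : ℝ → ℕ}
    (hbin : ∀ᶠ x : ℝ in atTop, x ^ (-(1 - ε)) ≤
      binLt (connProb M (scale M γ x)) (⌊(1 + η) ^ 2 * x⌋₊ + 1) (s x)) :
    ∃ C, ∀ᶠ x : ℝ in atTop,
      P.real {ω | ∀ i ∈ Finset.Icc 1 ⌊(1 - η) * x⌋₊, ω ∉ cntLt M (scale M γ x) i
        ((Finset.Icc 1 (⌊(1 + η) ^ 2 * x⌋₊ + 2)).erase i) (s x)} ≤ C * x ^ (-(ε / 2)) := by
  have hη : 0 < 1 - η := by linarith
  have hα := M.α_pos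
  set V := volume.real (Metric.ball (0 : EuclideanSpace ℝ (Fin d)) 1)
  have hV : 0 ≤ V := measureReal_nonneg
  refine ⟨2 / (1 - η) + 8 * γ + 4 + 2 * ((8 / c) ^ d * (γ / M.α) * V), ?_⟩
  filter_upwards [hbin, eventually_connFun_mul_log_le M hc hg,
    Real.tendsto_log_atTop.eventually_ge_atTop 1, eventually_ge_atTop (2 / (1 - η)),
    (tendsto_const_mul_log_div γ).eventually_le_const (show (0 : ℝ) < 1 / 2 by norm_num),
    (isLittleO_log_rpow_rpow_atTop (d + 1 : ℕ) (half_pos hε0)).bound one_pos]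
    with x ha hw hL1 hxη hq hlog
  have hx1 : 1 < x := by
    by_contra! h
    have h0 : 0 < x := lt_of_lt_of_le (by positivity) hxη
    linarith [Real.log_nonpos h0.le h]
  have hx0 : 0 < x := by linarith
  have hr := scale_pos M hγ hx1
  have hple := connProb_le M hr
  have hrd := α_mul_scale_pow M hd hγ hx1
  rw [hrd] at hple
  have hp0 := connProb_nonneg M (scale M γ x)
  have hw0 := connFun_nonneg M (4 / c * Real.log x)
  set L := Real.log x with hLdef
  have hm : (1 - η) * x / 2 ≤ ⌊(1 - η) * x⌋₊ := by
    have h1 := Nat.lt_floor_add_one ((1 - η) * x)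
    have h2 := (div_le_iff₀' hη).1 hxη
    linarith
  have hm1 : 1 ≤ ⌊(1 - η) * x⌋₊ := Nat.le_floor (by
    have h2 := (div_le_iff₀' hη).1 hxη
    push_cast
    linarith)
  have hmk : ⌊(1 - η) * x⌋₊ ≤ ⌊(1 + η) ^ 2 * x⌋₊ + 2 :=
    (Nat.floor_le_floor (by nlinarith [mul_pos hη0 hx0])).trans (Nat.le_add_right _ _)
  have hk : (⌊(1 + η) ^ 2 * x⌋₊ : ℝ) ≤ 4 * x :=
    (Nat.floor_le (by positivity)).trans
      (mul_le_mul_of_nonneg_right (by nlinarith) hx0.le)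
  have hxε : 0 < x ^ (-(1 - ε)) := Real.rpow_pos_of_pos hx0 _
  have hbd := measureReal_forall_le_cnt_le M hr (D := 4 / c * L) (by positivity)
    (hple.trans hq) hm1 hmk rfl (hxε.trans_le ha)
  refine hbd.trans ?_
  clear hbd hbin
  set a := binLt (connProb M (scale M γ x)) (⌊(1 + η) ^ 2 * x⌋₊ + 1) (s x)
  set p := connProb M (scale M γ x)
  set w := connFun M (4 / c * L)
  set m := ⌊(1 - η) * x⌋₊
  set k := ⌊(1 + η) ^ 2 * x⌋₊
  have ha0 : 0 < a := hxε.trans_le ha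
  have hp1 : 1 / 2 ≤ 1 - p := by linarith
  have hainv : 1 / a ≤ x * x ^ (-ε) := by
    rw [one_div]
    refine (inv_anti₀ hxε ha).trans_eq ?_
    rw [← Real.rpow_neg hx0.le, neg_neg, Real.rpow_sub hx0, Real.rpow_one, Real.rpow_neg hx0.le]
    rfl
  set y := x ^ (-ε) with hy
  have hy0 : 0 < y := Real.rpow_pos_of_pos hx0 _
  have hy1 : y ≤ 1 := Real.rpow_le_one_of_one_le_of_nonpos hx1.le (by linarith)
  have hxy : 1 / x ≤ y := by
    rw [one_div, ← Real.rpow_neg_one]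
    exact Real.rpow_le_rpow_of_exponent_le hx1.le (by linarith)
  have hfin : L ^ (d + 1) * y ≤ x ^ (-(ε / 2)) := by
    rw [one_mul, Real.rpow_natCast, Real.norm_of_nonneg (by positivity),
      Real.norm_of_nonneg (by positivity)] at hlog
    calc L ^ (d + 1) * y ≤ x ^ (ε / 2) * y := by gcongr
      _ = _ := by rw [hy, ← Real.rpow_add hx0]; ring_nf
  refine (second_moment_error_le hx1 hy0 hy1 hxy hL1 hc hγ hη hα hV hp0 hp1 hple ha0 hainv hw0 hw hm
    hk hrd).trans ?_
  gcongr

lemma exists_upper_slack {γ b : ℝ} (hγ : 0 < γ) (hb0 : 0 < b) (hb1 : b < 1) (h : H b < 1 / γ) :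
    ∃ η ε, 0 < η ∧ η < 1 ∧ b ≤ (1 - η) ^ 2 ∧ 0 < ε ∧ ε ≤ 1 ∧
      γ * ((1 + η) ^ 4 - b * (1 + Real.log ((1 - η) ^ 2 / b))) + ε ≤ 1 - ε := by
  have hc : ContinuousAt
      (fun η : ℝ => γ * ((1 + η) ^ 4 - b * (1 + Real.log ((1 - η) ^ 2 / b)))) 0 := by
    have : ((1 - (0 : ℝ)) ^ 2 / b) ≠ 0 := by
      have := hb0.ne'
      simp [this]
    fun_prop (disch := assumption)
  have h1 : γ * ((1 + (0 : ℝ)) ^ 4 - b * (1 + Real.log ((1 - (0 : ℝ)) ^ 2 / b))) < 1 := by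
    rw [lt_div_iff₀' hγ, H] at h
    simp only [add_zero, sub_zero, one_pow, one_div, Real.log_inv]
    linarith
  have hc' : ContinuousAt (fun η : ℝ => (1 - η) ^ 2) 0 := by fun_prop
  have h2 := (hc.eventually_lt_const h1).filter_mono
    (nhdsWithin_le_nhds (s := Set.Ioi (0 : ℝ)))
  have h3 := (hc'.eventually_const_lt (show b < (1 - (0 : ℝ)) ^ 2 by simpa using hb1)).filter_mono
    (nhdsWithin_le_nhds (s := Set.Ioi (0 : ℝ)))
  obtain ⟨η, ⟨h4, h5⟩, h6⟩ := ((h2.and h3).and (Ioo_mem_nhdsGT one_pos)).exists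
  set φ := γ * ((1 + η) ^ 4 - b * (1 + Real.log ((1 - η) ^ 2 / b)))
  refine ⟨η, min 1 ((1 - φ) / 2), h6.1, h6.2, h5.le, lt_min one_pos (by linarith),
    min_le_left _ _, ?_⟩
  linarith [min_le_right 1 ((1 - φ) / 2)]

lemma ae_eventually_minDeg_le [IsProbabilityMeasure P] (M : Model d P) (hd : d ≠ 0)
    {c : ℝ} (hc : 0 < c) (hg : M.g =o[atTop] fun r : ℝ => Real.exp (-(c * r)))
    {γ b : ℝ} (hγ : 0 < γ) (hb0 : 0 < b) (hb1 : b < 1) (h : H b < 1 / γ) :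
    ∀ᵐ ω ∂P, ∀ᶠ n : ℕ in atTop, minDeg M n (rhat M γ n) ω ≤ γ * b * Real.log n := by
  obtain ⟨η, ε, hη0, hη1, hbη, hε0, hε1, hφ⟩ := exists_upper_slack hγ hb0 hb1 h
  have hη : 0 < 1 - η := by linarith
  have hρ : 1 < 1 + η := by linarith
  have hbin : ∀ᶠ x : ℝ in atTop, x ^ (-(1 - ε)) ≤
      binLt (connProb M (scale M γ x)) (⌊(1 + η) ^ 2 * x⌋₊ + 1) ⌈γ * b * Real.log x⌉₊ := by
    filter_upwards [eventually_le_binLt M hd hγ hb0 hb1 hη0 hη1 hbη hε0, eventually_gt_atTop 1]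
      with x hx hx1
    exact (Real.rpow_le_rpow_of_exponent_le hx1.le (neg_le_neg hφ)).trans hx
  obtain ⟨C, hC⟩ := eventually_measureReal_upper M hd hc hg hγ hη0 hη1 hε0 hε1 hbin
  filter_upwards [ae_eventually_N_bounds M hη0 hη1,
    ae_eventually_notMem_pow (half_pos hε0) hρ hC] with ω hN hB
  filter_upwards [hN, eventually_exists_pow_le hρ
      (Q := fun x => ¬ ∀ i ∈ Finset.Icc 1 ⌊(1 - η) * x⌋₊, ω ∉ cntLt M (scale M γ x) i
        ((Finset.Icc 1 (⌊(1 + η) ^ 2 * x⌋₊ + 2)).erase i) ⌈γ * b * Real.log x⌉₊) hB,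
    tendsto_natCast_atTop_atTop.eventually_ge_atTop (Real.exp 1 * (1 + η))]
    with n ⟨hN1, hN2⟩ ⟨x, hx, hxn, hnx⟩ hne
  push Not at hx
  obtain ⟨i, hi, hlt⟩ := hx
  obtain ⟨hi1, hi2⟩ := Finset.mem_Icc.1 hi
  have hxe : Real.exp 1 ≤ x := by
    have h1 : Real.exp 1 * (1 + η) ≤ x * (1 + η) := by linarith
    exact le_of_mul_le_mul_right h1 (by linarith)
  have hx0 : 0 < x := (Real.exp_pos 1).trans_le hxe
  have hn1 : (1 : ℝ) < n := (Real.one_lt_exp_iff.2 one_pos).trans_le (hxe.trans hxn)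
  have hiN : i ≤ M.N n ω := by
    have h1 : ((⌊(1 - η) * x⌋₊ : ℕ) : ℝ) ≤ M.N n ω :=
      (Nat.floor_le (by positivity)).trans ((mul_le_mul_of_nonneg_left hxn hη.le).trans hN1)
    exact hi2.trans (by exact_mod_cast h1)
  have hsub : Finset.Icc 1 (M.N n ω) ⊆ Finset.Icc 1 (⌊(1 + η) ^ 2 * x⌋₊ + 2) := by
    refine Finset.Icc_subset_Icc_right (le_trans (Nat.le_floor ?_) (Nat.le_add_right _ 2))
    calc (M.N n ω : ℝ) ≤ (1 + η) * n := hN2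
      _ ≤ (1 + η) * ((1 + η) * x) := by gcongr
      _ = (1 + η) ^ 2 * x := by ring
  have hdeg : minDeg M n (rhat M γ n) ω ≤ cnt M (scale M γ x) i
      ((Finset.Icc 1 (⌊(1 + η) ^ 2 * x⌋₊ + 2)).erase i) ω :=
    (minDeg_le_deg M hi1 hiN).trans
      (deg_le_cnt M (scale_pos M hγ hn1) (scale_le_scale M hγ hxe hxn) hsub)
  calc (minDeg M n (rhat M γ n) ω : ℝ) ≤ γ * b * Real.log x :=
        (Nat.lt_ceil.1 (hdeg.trans_lt (mem_cntLt.1 hlt))).le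
    _ ≤ _ := by gcongr

/-! ### The rate function -/

lemma continuous_H : Continuous H :=
  (continuous_const.sub continuous_id).add Real.continuous_mul_log

lemma H_one : H 1 = 0 := by simp [H]

lemma strictAntiOn_H : StrictAntiOn H (Set.Icc 0 1) := by
  refine strictAntiOn_of_deriv_neg (convex_Icc 0 1) continuous_H.continuousOn fun x hx => ?_
  rw [interior_Icc] at hx
  have h : HasDerivAt H (0 - 1 + (Real.log x + 1)) x :=
    ((hasDerivAt_const x 1).sub (hasDerivAt_id x)).add (Real.hasDerivAt_mul_log hx.1.ne')
  rw [h.deriv]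
  linarith [Real.log_neg hx.1 hx.2]

lemma bddBelow_setOf_H_le (y : ℝ) : BddBelow {x : ℝ | 0 ≤ x ∧ H x ≤ y} := ⟨0, fun _ hx => hx.1⟩

lemma lt_H_of_lt_Hminusinv {b y : ℝ} (hb : 0 ≤ b) (h : b < Hminusinv y) : y < H b :=
  not_le.1 fun hle => notMem_of_lt_csInf h (bddBelow_setOf_H_le y) ⟨hb, hle⟩

lemma H_lt_of_Hminusinv_lt {b y : ℝ} (hb : b ≤ 1) (hy : 0 ≤ y) (h : Hminusinv y < b) :
    H b < y := by
  obtain ⟨x, ⟨hx0, hxy⟩, hxb⟩ := exists_lt_of_csInf_lt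
    (s := {x : ℝ | 0 ≤ x ∧ H x ≤ y}) ⟨1, zero_le_one, H_one.trans_le hy⟩ h
  exact (strictAntiOn_H ⟨hx0, hxb.le.trans hb⟩ ⟨hx0.trans hxb.le, hb⟩ hxb).trans_le hxy

lemma Hminusinv_nonneg (y : ℝ) : 0 ≤ Hminusinv y := Real.sInf_nonneg fun _ hx => hx.1

lemma Hminusinv_lt_one {y : ℝ} (hy : 0 < y) : Hminusinv y < 1 := by
  have h := (continuous_H.tendsto 1).eventually_le_const (H_one.trans_lt hy)
  obtain ⟨x, hx, hx0, hx1⟩ := ((h.filter_mono (nhdsWithin_le_nhds (s := Set.Iio 1))).and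
    (Ioo_mem_nhdsLT zero_lt_one)).exists
  exact (csInf_le (bddBelow_setOf_H_le y) ⟨hx0.le, hx⟩).trans_lt hx1

/-- Theorem 4(iii): for `γ > 1`, a.s. `δ_n/log n → γ H₋⁻¹(1/γ)`. -/
theorem minDeg_tendsto (hd : 2 ≤ d) [IsProbabilityMeasure P] (M : Model d P)
    {c : ℝ} (hc : 0 < c)
    (hg : M.g =o[atTop] fun r : ℝ => Real.exp (-(c * r)))
    {γ : ℝ} (hγ : 1 < γ) :
    ∀ᵐ ω ∂P, Tendsto
      (fun n : ℕ => (minDeg M n (rhat M γ n) ω : ℝ) / Real.log n) atTop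
        (nhds (γ * Hminusinv (1 / γ))) := by
  have hd0 : d ≠ 0 := by omega
  have hγ0 : 0 < γ := by linarith
  have hy : 0 < 1 / γ := by positivity
  have hlt1 := Hminusinv_lt_one hy
  set β := Hminusinv (1 / γ) with hβ
  have hβ0 : 0 ≤ β := Hminusinv_nonneg _
  have hlow : ∀ᵐ ω ∂P, ∀ q : ℚ, 0 < (q : ℝ) → (q : ℝ) < β →
      ∀ᶠ n : ℕ in atTop, γ * q * Real.log n ≤ minDeg M n (rhat M γ n) ω :=
    ae_all_iff.2 fun q => by
      by_cases hq : 0 < (q : ℝ) ∧ (q : ℝ) < β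
      · filter_upwards [ae_eventually_le_minDeg M hd0 hγ0 hq.1 (hq.2.trans hlt1)
          (lt_H_of_lt_Hminusinv hq.1.le hq.2)] with ω h _ _ using h
      · exact Eventually.of_forall fun ω h1 h2 => absurd ⟨h1, h2⟩ hq
  have hup : ∀ᵐ ω ∂P, ∀ q : ℚ, β < (q : ℝ) → (q : ℝ) < 1 →
      ∀ᶠ n : ℕ in atTop, minDeg M n (rhat M γ n) ω ≤ γ * q * Real.log n :=
    ae_all_iff.2 fun q => by
      by_cases hq : β < (q : ℝ) ∧ (q : ℝ) < 1
      · filter_upwards [ae_eventually_minDeg_le M hd0 hc hg hγ0 (hβ0.trans_lt hq.1) hq.2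
          (H_lt_of_Hminusinv_lt hq.2.le hy.le hq.1)] with ω h _ _ using h
      · exact Eventually.of_forall fun ω h1 h2 => absurd ⟨h1, h2⟩ hq
  filter_upwards [hlow, hup] with ω hl hu
  have hlogn : ∀ᶠ n : ℕ in atTop, 0 < Real.log n :=
    (Real.tendsto_log_atTop.comp tendsto_natCast_atTop_atTop).eventually_gt_atTop 0
  refine tendsto_order.2 ⟨fun a ha => ?_, fun a ha => ?_⟩
  · rcases lt_or_ge a 0 with ha0 | ha0
    · filter_upwards [hlogn] with n hn
      exact ha0.trans_le (by positivity)
    · obtain ⟨q, hq1, hq2⟩ := exists_rat_btwn ((div_lt_iff₀' hγ0).2 ha)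
      filter_upwards [hl q ((div_nonneg ha0 hγ0.le).trans_lt hq1) hq2, hlogn] with n hn hn0
      exact ((div_lt_iff₀' hγ0).1 hq1).trans_le ((le_div_iff₀ hn0).2 hn)
  · obtain ⟨q, hq1, hq2⟩ := exists_rat_btwn (lt_min ((lt_div_iff₀' hγ0).2 ha) hlt1)
    filter_upwards [hu q hq1 (hq2.trans_le (min_le_right _ _)), hlogn] with n hn hn0
    exact ((div_le_iff₀ hn0).2 hn).trans_lt
      ((lt_div_iff₀' hγ0).1 (hq2.trans_le (min_le_left _ _)))

end RCM
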